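/- arXiv:1205.1749 — 11 statements merged into one kernel-verified Lean document; each statement's English description precedes it below -/
import Mathlib

section
/- Let n ≥ 1 be an integer, ε_1, …, ε_n ∈ {−1, 1} and r_1, …, r_n > 0. For u ∈ C_c^∞(ℝⁿ) set Q(u) = ∫_{ℝⁿ} ( Σ_{j=1}^n (∂_j u)²/r_j² − 2 Σ_{1≤j<k≤n} ε_j ε_k (∂_j u)(∂_k u)/(r_j r_k) ) and F(u) = −∫_{ℝⁿ} ( Σ_{j=1}^n ε_j ∂_j∂_j u )² − Q(u). If there exist u₊, u₋ ∈ C_c^∞(ℝⁿ) with Q(u₊) > 0 and Q(u₋) < 0, then F is also indefinite: there exist v₊, v₋ ∈ C_c^∞(ℝⁿ) with F(v₊) > 0 and F(v₋) < 0. -/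
open MeasureTheory Real

/-- The partial derivative `∂_j u` of a function `u : ℝⁿ → ℝ`. -/
noncomputable def pd {n : ℕ} (j : Fin n) (u : (Fin n → ℝ) → ℝ) (x : Fin n → ℝ) : ℝ :=
  fderiv ℝ u x (Pi.single j 1)

/-- Membership in `C_c^∞(ℝⁿ)`: smooth and compactly supported. -/
def IsCc {n : ℕ} (u : (Fin n → ℝ) → ℝ) : Prop :=
  ContDiff ℝ (⊤ : ℕ∞) u ∧ HasCompactSupport u

theorem pd_scale {n : ℕ} (j : Fin n) (u : (Fin n → ℝ) → ℝ) (c t : ℝ) :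
    pd j (fun x => c * u (t • x)) = fun x => (c * t) * pd j u (t • x) := by
  funext x
  unfold pd
  have h1 : (fun x => c * u (t • x)) = c • (fun x => u (t • x)) := by
    funext y; simp
  rw [h1, fderiv_const_smul_field, Pi.smul_apply, fderiv_comp_smul]
  simp [mul_assoc]

theorem pd_scale1 {n : ℕ} (j : Fin n) (u : (Fin n → ℝ) → ℝ) (t : ℝ) :
    pd j (fun x => u (t • x)) = fun x => t * pd j u (t • x) := by
  have := pd_scale j u 1 t
  simpa using this

/-- If the first-order quadratic functional `Q` is indefinite on `C_c^∞(ℝⁿ)`,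
then so is the full second variation functional
`F(u) = −∫ (Σ ε_j ∂_j∂_j u)² − Q(u)` of the product of hyperbolas. -/
theorem second_variation_indefinite_of_Q_indefinite
    (n : ℕ) (hn : 1 ≤ n) (ε r : Fin n → ℝ)
    (hε : ∀ j, ε j = -1 ∨ ε j = 1) (hr : ∀ j, 0 < r j)
    (Q F : ((Fin n → ℝ) → ℝ) → ℝ)
    (hQ : ∀ u, Q u = ∫ x, (∑ j, (pd j u x) ^ 2 / (r j) ^ 2
        - 2 * ∑ j, ∑ k, (if j < k then ε j * ε k * pd j u x * pd k u x / (r j * r k) else 0)))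
    (hF : ∀ u, F u = -(∫ x, (∑ j, ε j * pd j (pd j u) x) ^ 2) - Q u)
    (up um : (Fin n → ℝ) → ℝ) (hup : IsCc up) (hum : IsCc um)
    (hQp : 0 < Q up) (hQm : Q um < 0) :
    ∃ vp vm : (Fin n → ℝ) → ℝ, IsCc vp ∧ IsCc vm ∧ 0 < F vp ∧ F vm < 0 := by
  have hA : ∀ u : (Fin n → ℝ) → ℝ, 0 ≤ ∫ x, (∑ j, ε j * pd j (pd j u) x) ^ 2 :=
    fun u => integral_nonneg fun x => sq_nonneg _
  set A := ∫ x, (∑ j, ε j * pd j (pd j um) x) ^ 2 with hAdef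
  have hA0 : 0 ≤ A := hA um
  obtain ⟨t, ht, htA⟩ : ∃ t : ℝ, 0 < t ∧ t ^ 2 * A < - Q um := by
    refine ⟨√(-Q um / (A + 1)), Real.sqrt_pos.2 (by apply div_pos <;> linarith), ?_⟩
    rw [Real.sq_sqrt (by apply div_nonneg <;> linarith), div_mul_eq_mul_div,
      div_lt_iff₀ (by linarith)]
    nlinarith
  refine ⟨fun x => um (t • x), up, ⟨?_, ?_⟩, hup, ?_, ?_⟩
  · exact hum.1.comp (contDiff_const_smul t)
  · exact hum.2.comp_homeomorph (Homeomorph.smulOfNeZero t ht.ne')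
  · set K : ℝ := |(t ^ Module.finrank ℝ (Fin n → ℝ))⁻¹| with hK
    have hKpos : 0 < K := by positivity
    have e1 : Q (fun x => um (t • x)) = t ^ 2 * (K * Q um) := by
      rw [hQ, hQ um, ← smul_eq_mul K, hK, ← Measure.integral_comp_smul, ← integral_const_mul]
      congr 1
      funext x
      simp only [pd_scale1]
      rw [mul_sub, mul_left_comm (t ^ 2) 2]
      refine congrArg₂ _ ?_ (congrArg _ ?_)
      · rw [Finset.mul_sum]
        exact Finset.sum_congr rfl fun j _ => by ring
      · rw [Finset.mul_sum]
        refine Finset.sum_congr rfl fun j _ => ?_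
        rw [Finset.mul_sum]
        refine Finset.sum_congr rfl fun k _ => ?_
        split_ifs <;> ring
    have e2 : (∫ x, (∑ j, ε j * pd j (pd j (fun x => um (t • x))) x) ^ 2) = t ^ 4 * (K * A) := by
      rw [hAdef, ← smul_eq_mul K, hK,
        ← Measure.integral_comp_smul volume (fun x => (∑ j, ε j * pd j (pd j um) x) ^ 2),
        ← integral_const_mul]
      congr 1
      funext x
      simp only [pd_scale1, pd_scale]
      have : ∑ j, ε j * (t * t * pd j (pd j um) (t • x))
          = t ^ 2 * ∑ j, ε j * pd j (pd j um) (t • x) := by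
        rw [Finset.mul_sum]
        exact Finset.sum_congr rfl fun j _ => by ring
      rw [this]; ring
    rw [hF, e1, e2]
    have : 0 < t ^ 2 * K * (-Q um - t ^ 2 * A) := by
      apply mul_pos (by positivity); linarith
    nlinarith
  · rw [hF]; linarith [hA up]
end

section
/- Let n ≥ 3 be an integer, ε_1, …, ε_n ∈ {−1, 1} and r_1, …, r_n > 0. The functional F(u) = ∫_{ℝⁿ} ( −( Σ_{j=1}^n ε_j ∂_j∂_j u )² − Σ_{j=1}^n (∂_j u)²/r_j² + 2 Σ_{1≤j<k≤n} ε_j ε_k (∂_j u)(∂_k u)/(r_j r_k) ) is indefinite on C_c^∞(ℝⁿ): there exist u, v ∈ C_c^∞(ℝⁿ) with F(u) > 0 and F(v) < 0. -/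
open MeasureTheory Real

theorem hyp_integral_comp {n : ℕ} (e : (Fin n → ℝ) →L[ℝ] (Fin n → ℝ))
    (he : Function.Injective e) :
    ∃ c : ℝ, 0 < c ∧ ∀ g : (Fin n → ℝ) → ℝ, Continuous g → ∫ x, g (e x) = c * ∫ x, g x := by
  have hdet : LinearMap.det (e : (Fin n → ℝ) →ₗ[ℝ] (Fin n → ℝ)) ≠ 0 := by
    have := (LinearEquiv.ofInjectiveEndo (e : (Fin n → ℝ) →ₗ[ℝ] (Fin n → ℝ)) he).isUnit_det'
    exact this.ne_zero
  refine ⟨|(LinearMap.det (e : (Fin n → ℝ) →ₗ[ℝ] (Fin n → ℝ)))⁻¹|, by positivity, ?_⟩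
  intro g hg
  have h1 := MeasureTheory.Measure.map_linearMap_addHaar_eq_smul_addHaar (volume : Measure (Fin n → ℝ)) hdet
  have h2 : ∫ y, g y ∂(Measure.map e volume) = ∫ x, g (e x) :=
    integral_map e.continuous.aemeasurable hg.aestronglyMeasurable
  rw [← h2]
  have h3 : Measure.map e volume = ENNReal.ofReal
      |(LinearMap.det (e : (Fin n → ℝ) →ₗ[ℝ] (Fin n → ℝ)))⁻¹| • volume := h1
  rw [h3, integral_smul_measure, ENNReal.toReal_ofReal (abs_nonneg _), smul_eq_mul]

theorem hyp_pd_comp {n : ℕ} (e : (Fin n → ℝ) →L[ℝ] (Fin n → ℝ)) (u : (Fin n → ℝ) → ℝ)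
    (hu : Differentiable ℝ u) (j : Fin n) (x : Fin n → ℝ) :
    pd j (fun x => u (e x)) x = ∑ i, e (Pi.single j 1) i * pd i u (e x) := by
  unfold pd
  have h : HasFDerivAt (fun x => u (e x)) ((fderiv ℝ u (e x)).comp e) x :=
    (hu (e x)).hasFDerivAt.comp x e.hasFDerivAt
  rw [h.fderiv, ContinuousLinearMap.comp_apply]
  conv_lhs => rw [← Finset.univ_sum_single (e (Pi.single j 1)), map_sum]
  refine Finset.sum_congr rfl fun i _ => ?_
  rw [← smul_eq_mul, ← map_smul, ← Pi.single_smul, smul_eq_mul, mul_one]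

theorem hyp_pd_const_mul {n : ℕ} (c : ℝ) (u : (Fin n → ℝ) → ℝ)
    (hu : Differentiable ℝ u) (j : Fin n) (x : Fin n → ℝ) :
    pd j (fun x => c * u x) x = c * pd j u x := by
  unfold pd
  rw [fderiv_const_mul (hu x)]
  simp

theorem hyp_pd_cc {n : ℕ} {u : (Fin n → ℝ) → ℝ} (hu : IsCc u) (j : Fin n) : IsCc (pd j u) := by
  refine ⟨?_, ?_⟩
  · have := hu.1.fderiv_right (m := ((⊤ : ℕ∞) : WithTop ℕ∞)) (by simp)
    exact this.clm_apply contDiff_const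
  · exact hu.2.fderiv_apply (𝕜 := ℝ) (Pi.single j 1)

theorem IsCc.diff {n : ℕ} {u : (Fin n → ℝ) → ℝ} (hu : IsCc u) : Differentiable ℝ u :=
  hu.1.differentiable (by simp)

theorem hyp_cc_add {n : ℕ} {u v : (Fin n → ℝ) → ℝ} (hu : IsCc u) (hv : IsCc v) :
    IsCc (fun x => u x + v x) := ⟨hu.1.add hv.1, hu.2.add hv.2⟩

theorem hyp_cc_mul {n : ℕ} {u v : (Fin n → ℝ) → ℝ} (hu : IsCc u) (hv : IsCc v) :
    IsCc (fun x => u x * v x) := ⟨hu.1.mul hv.1, hu.2.mul_right⟩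

theorem hyp_cc_const {n : ℕ} {u : (Fin n → ℝ) → ℝ} (c : ℝ) (hu : IsCc u) :
    IsCc (fun x => c * u x) := ⟨contDiff_const.mul hu.1, hu.2.mul_left⟩

theorem hyp_cc_sum {n : ℕ} {ι : Type} (s : Finset ι) {u : ι → (Fin n → ℝ) → ℝ}
    (hu : ∀ i, IsCc (u i)) : IsCc (fun x => ∑ i ∈ s, u i x) := by
  classical
  induction s using Finset.induction_on with
  | empty => exact ⟨by simpa using contDiff_const, by simp only [Finset.sum_empty]; exact HasCompactSupport.zero⟩
  | insert a s ha ih =>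
    simp only [Finset.sum_insert ha]
    exact hyp_cc_add (hu a) ih

theorem IsCc.integ {n : ℕ} {u : (Fin n → ℝ) → ℝ} (hu : IsCc u) : Integrable u :=
  hu.1.continuous.integrable_of_hasCompactSupport hu.2

/-- The linear change of variables. -/
noncomputable def hypE {n : ℕ} (b : Fin n → ℝ) (m s : ℝ) : (Fin n → ℝ) →L[ℝ] (Fin n → ℝ) :=
  LinearMap.toContinuousLinearMap
    { toFun := fun x i => s * (b i * x i + m * ∑ k, b k * x k)
      map_add' := by
        intro x y
        ext i
        simp only [Pi.add_apply, mul_add, Finset.sum_add_distrib]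
        ring
      map_smul' := by
        intro c x
        ext i
        simp only [Pi.smul_apply, smul_eq_mul, RingHom.id_apply]
        have : ∑ k, b k * (c * x k) = c * ∑ k, b k * x k := by
          rw [Finset.mul_sum]
          exact Finset.sum_congr rfl fun k _ => by ring
        rw [this]
        ring }

theorem hypE_apply {n : ℕ} (b : Fin n → ℝ) (m s : ℝ) (x : Fin n → ℝ) (i : Fin n) :
    hypE b m s x i = s * (b i * x i + m * ∑ k, b k * x k) := rfl

theorem hypE_single {n : ℕ} (b : Fin n → ℝ) (m s : ℝ) (i j : Fin n) :
    hypE b m s (Pi.single j 1) i = s * b j * ((if i = j then 1 else 0) + m) := by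
  rw [hypE_apply]
  simp only [Pi.single_apply, mul_ite, mul_one, mul_zero, Finset.sum_ite_eq', Finset.mem_univ,
    if_true]
  split_ifs with h
  · subst h; ring
  · ring

theorem hypE_inj {n : ℕ} (b : Fin n → ℝ) (hb : ∀ i, b i ≠ 0) (m s : ℝ) (hm : 0 ≤ m) (hs : 0 < s) :
    Function.Injective (hypE b m s) := by
  refine (injective_iff_map_eq_zero _).2 fun x hx => ?_
  have h1 : ∀ i, b i * x i + m * ∑ k, b k * x k = 0 := by
    intro i
    have := congrFun hx i
    rw [hypE_apply] at this
    simpa [hs.ne'] using this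
  have h2 : (1 + n * m) * ∑ k, b k * x k = 0 := by
    have := Finset.sum_eq_zero (s := Finset.univ) fun i _ => h1 i
    rw [Finset.sum_add_distrib] at this
    simp at this
    linarith
  have h3 : ∑ k, b k * x k = 0 := by
    have : (1 + n * m) ≠ 0 := by positivity
    simpa [this] using h2
  ext i
  have := h1 i
  rw [h3] at this
  simpa [hb i] using this

/-- twisted derivative -/
noncomputable def hypD {n : ℕ} (m : ℝ) (j : Fin n) (u : (Fin n → ℝ) → ℝ) (x : Fin n → ℝ) : ℝ :=
  pd j u x + m * ∑ i, pd i u x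

theorem hypD_cc {n : ℕ} {u : (Fin n → ℝ) → ℝ} (m : ℝ) (hu : IsCc u) (j : Fin n) :
    IsCc (hypD m j u) :=
  hyp_cc_add (hyp_pd_cc hu j) (hyp_cc_const m (hyp_cc_sum _ fun i => hyp_pd_cc hu i))

theorem hyp_pd_E {n : ℕ} (b : Fin n → ℝ) (m s : ℝ) (u : (Fin n → ℝ) → ℝ)
    (hu : Differentiable ℝ u) (j : Fin n) :
    pd j (fun x => u (hypE b m s x)) = fun x => (s * b j) * hypD m j u (hypE b m s x) := by
  funext x
  rw [hyp_pd_comp _ _ hu]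
  simp only [hypE_single, hypD, mul_assoc, add_mul, mul_add, Finset.sum_add_distrib,
    ite_mul, one_mul, zero_mul, mul_ite, mul_zero, Finset.sum_ite_eq', Finset.mem_univ, if_true,
    Finset.mul_sum]

theorem hyp_pair {n : ℕ} (q : Fin n → ℝ) :
    2 * ∑ j, ∑ k, (if j < k then q j * q k else 0) = (∑ j, q j) ^ 2 - ∑ j, q j ^ 2 := by
  have h : (∑ j, q j) ^ 2 = ∑ j, ∑ k, ((if j < k then q j * q k else 0)
      + (if k < j then q k * q j else 0) + (if j = k then q j ^ 2 else 0)) := by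
    rw [sq, Finset.sum_mul_sum]
    refine Finset.sum_congr rfl fun j _ => Finset.sum_congr rfl fun k _ => ?_
    rcases lt_trichotomy j k with h | h | h
    · simp [h, h.not_gt, h.ne]
    · subst h; simp [sq]
    · simp [h, h.not_gt, h.ne', mul_comm]
  rw [h]
  simp only [Finset.sum_add_distrib]
  rw [Finset.sum_comm (f := fun j k => if k < j then q k * q j else 0)]
  simp
  ring

theorem hyp_key {n : ℕ} (ε r : Fin n → ℝ)
    (hε : ∀ j, ε j = -1 ∨ ε j = 1) (hr : ∀ j, 0 < r j)
    (Φ : (Fin n → ℝ) → ℝ) (hΦ : IsCc Φ)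
    (hcross : ∀ j k, j ≠ k → ∫ x, pd j Φ x * pd k Φ x = 0)
    (m : ℝ) (hm : 0 ≤ m) : ∃ A : ℝ, 0 ≤ A ∧ ∀ s : ℝ, 0 < s → ∃ u c, IsCc u ∧ 0 < c ∧
      (∫ x, (-(∑ j, ε j * pd j (pd j u) x) ^ 2 - ∑ j, (pd j u x) ^ 2 / (r j) ^ 2
          + 2 * ∑ j, ∑ k, (if j < k then ε j * ε k * pd j u x * pd k u x / (r j * r k) else 0)))
      = c * (s ^ 2 * (((1 + n * m) ^ 2 - 4 * m - 2 * n * m ^ 2 - 2) * ∫ x, ∑ j, pd j Φ x ^ 2)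
          - s ^ 4 * A) := by
  have hε2 : ∀ j, ε j * ε j = 1 := fun j => by rcases hε j with h | h <;> rw [h] <;> norm_num
  set b : Fin n → ℝ := fun j => ε j * r j with hb
  have hb0 : ∀ j, b j ≠ 0 := fun j => mul_ne_zero
    (fun h => by have := hε2 j; rw [h] at this; norm_num at this) (hr j).ne'
  set H : (Fin n → ℝ) → ℝ := fun z => ∑ j, (ε j * b j ^ 2) * hypD m j (hypD m j Φ) z with hH
  have hHcc : IsCc H := hyp_cc_sum _ fun j => hyp_cc_const _ (hypD_cc m (hypD_cc m hΦ j) j)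
  refine ⟨∫ z, H z * H z, integral_nonneg fun z => mul_self_nonneg _, fun s hs => ?_⟩
  have hinj := hypE_inj b hb0 m s hm hs
  obtain ⟨c, hc, hcov⟩ := hyp_integral_comp (hypE b m s) hinj
  refine ⟨fun x => Φ (hypE b m s x), c, ⟨hΦ.1.comp (hypE b m s).contDiff, ?_⟩, hc, ?_⟩
  · have := LinearMap.isClosedEmbedding_of_injective
      (f := (hypE b m s : (Fin n → ℝ) →ₗ[ℝ] (Fin n → ℝ))) (LinearMap.ker_eq_bot.2 hinj)
    exact hΦ.2.comp_isClosedEmbedding this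
  have h1 := fun j => hyp_pd_E b m s Φ hΦ.diff j
  have h2 : ∀ j, pd j (pd j (fun x => Φ (hypE b m s x)))
      = fun x => s ^ 2 * b j ^ 2 * hypD m j (hypD m j Φ) (hypE b m s x) := by
    intro j
    rw [h1 j]
    funext x
    rw [hyp_pd_const_mul _ (fun x => hypD m j Φ (hypE b m s x))
      ((hypD_cc m hΦ j).diff.comp (hypE b m s).differentiable),
      hyp_pd_E b m s _ (hypD_cc m hΦ j).diff]
    ring
  set W : (Fin n → ℝ) → ℝ := fun z => ∑ j, pd j Φ z with hW
  set S : (Fin n → ℝ) → ℝ := fun z => ∑ j, pd j Φ z ^ 2 with hS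
  set κ : ℝ := (1 + n * m) ^ 2 - 4 * m - 2 * n * m ^ 2 with hκ
  have hWcc : IsCc W := hyp_cc_sum _ fun j => hyp_pd_cc hΦ j
  have hScc : IsCc S := by
    simp only [hS, sq]
    exact hyp_cc_sum _ fun j => hyp_cc_mul (hyp_pd_cc hΦ j) (hyp_pd_cc hΦ j)
  set G : (Fin n → ℝ) → ℝ := fun z => (s ^ 2 * κ) * (W z * W z) + (-(2 * s ^ 2)) * S z
    + (-(s ^ 4)) * (H z * H z) with hG
  have hpt : ∀ x, (-(∑ j, ε j * pd j (pd j (fun x => Φ (hypE b m s x))) x) ^ 2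
      - ∑ j, (pd j (fun x => Φ (hypE b m s x)) x) ^ 2 / (r j) ^ 2
      + 2 * ∑ j, ∑ k, (if j < k then ε j * ε k * pd j (fun x => Φ (hypE b m s x)) x
        * pd k (fun x => Φ (hypE b m s x)) x / (r j * r k) else 0)) = G (hypE b m s x) := by
    intro x
    simp only [h2]
    simp only [h1]
    set z := hypE b m s x
    have e1 : ∑ j, ε j * (s ^ 2 * b j ^ 2 * hypD m j (hypD m j Φ) z) = s ^ 2 * H z := by
      rw [hH, Finset.mul_sum]
      exact Finset.sum_congr rfl fun j _ => by ring
    have e2 : ∀ j, (s * b j * hypD m j Φ z) ^ 2 / r j ^ 2 = s ^ 2 * hypD m j Φ z ^ 2 := by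
      intro j
      have := (hr j).ne'
      simp only [hb]
      field_simp
      linear_combination (hypD m j Φ z) ^ 2 * hε2 j
    have e3 : ∀ j k, ε j * ε k * (s * b j * hypD m j Φ z) * (s * b k * hypD m k Φ z) / (r j * r k)
        = (s * hypD m j Φ z) * (s * hypD m k Φ z) := by
      intro j k
      have := (hr j).ne'
      have := (hr k).ne'
      have hj := hε2 j
      have hk := hε2 k
      simp only [hb]
      field_simp
      have : ε j ^ 2 * ε k ^ 2 = 1 := by rw [sq, sq, hj, hk, one_mul]
      linear_combination (hypD m j Φ z) * (hypD m k Φ z) * this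
    simp only [e1, e2, e3]
    rw [hyp_pair]
    have e4 : ∑ j, s * hypD m j Φ z = s * ((1 + n * m) * W z) := by
      rw [← Finset.mul_sum]
      simp only [hypD, Finset.sum_add_distrib, Finset.sum_const, Finset.card_univ,
        Fintype.card_fin, nsmul_eq_mul, hW]
      ring
    have e5 : ∑ j, hypD m j Φ z ^ 2 = S z + 2 * m * W z ^ 2 + n * m ^ 2 * W z ^ 2 := by
      have : ∀ j, hypD m j Φ z ^ 2 = pd j Φ z ^ 2 + (2 * m * W z) * pd j Φ z + m ^ 2 * W z ^ 2 := by
        intro j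
        simp only [hypD, hW]
        ring
      simp only [this, Finset.sum_add_distrib, ← Finset.mul_sum, Finset.sum_const,
        Finset.card_univ, Fintype.card_fin, nsmul_eq_mul]
      simp only [hS, hW]
      ring
    have e6 : ∑ j, (s * hypD m j Φ z) ^ 2 = s ^ 2 * ∑ j, hypD m j Φ z ^ 2 := by
      rw [Finset.mul_sum]
      exact Finset.sum_congr rfl fun j _ => by ring
    rw [e4, e6, ← Finset.mul_sum, e5]
    simp only [hG, hκ]
    ring
  simp only [hpt]
  have iW := hyp_cc_const (s ^ 2 * κ) (hyp_cc_mul hWcc hWcc)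
  have iS := hyp_cc_const (-(2 * s ^ 2)) hScc
  have iH := hyp_cc_const (-(s ^ 4)) (hyp_cc_mul hHcc hHcc)
  have hGcc : IsCc G := hyp_cc_add (hyp_cc_add iW iS) iH
  rw [hcov G hGcc.1.continuous]
  have hWS : ∫ z, W z * W z = ∫ z, S z := by
    simp only [hW, hS, Finset.sum_mul_sum]
    have ic := fun j k => (hyp_cc_mul (hyp_pd_cc hΦ j) (hyp_pd_cc hΦ k)).integ
    rw [integral_finsetSum _ fun j _ => integrable_finsetSum _ fun k _ => ic j k,
      integral_finsetSum _ fun j _ => by simpa only [sq] using ic j j]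
    refine Finset.sum_congr rfl fun j _ => ?_
    rw [integral_finsetSum _ fun k _ => ic j k,
      Finset.sum_eq_single j (fun k _ hk => hcross j k hk.symm) (by simp)]
    simp only [sq]
  have : ∫ z, G z = (s ^ 2 * κ) * (∫ z, S z) + (-(2 * s ^ 2)) * (∫ z, S z)
      + (-(s ^ 4)) * ∫ z, H z * H z := by
    simp only [hG]
    rw [integral_add (hyp_cc_add iW iS).integ iH.integ, integral_add iW.integ iS.integ,
      integral_const_mul, integral_const_mul, integral_const_mul, hWS]
  rw [this]
  ring

theorem hyp_bump {n : ℕ} (hn : 3 ≤ n) : ∃ Φ : (Fin n → ℝ) → ℝ, IsCc Φ ∧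
    (∀ j k, j ≠ k → ∫ x, pd j Φ x * pd k Φ x = 0) ∧ 0 < ∫ x, ∑ j, pd j Φ x ^ 2 := by
  let f : ContDiffBump (0 : ℝ) := ⟨1, 2, by norm_num, by norm_num⟩
  set Φ : (Fin n → ℝ) → ℝ := fun x => f (∑ i, x i ^ 2) with hΦ
  have hcc : IsCc Φ := by
    refine ⟨f.contDiff.comp (by fun_prop), ?_⟩
    refine HasCompactSupport.of_support_subset_isCompact (isCompact_closedBall 0 2) ?_
    intro x hx
    have h1 : (∑ i, x i ^ 2) ∈ Function.support f := hx
    rw [f.support_eq, Metric.mem_ball, Real.dist_eq, sub_zero] at h1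
    have h2 : ∑ i, x i ^ 2 < 2 := lt_of_le_of_lt (le_abs_self _) h1
    rw [mem_closedBall_zero_iff, pi_norm_le_iff_of_nonneg (by norm_num)]
    intro i
    have h3 : x i ^ 2 ≤ ∑ i, x i ^ 2 :=
      Finset.single_le_sum (f := fun i => x i ^ 2) (fun i _ => sq_nonneg _) (Finset.mem_univ i)
    rw [Real.norm_eq_abs, abs_le]
    constructor <;> nlinarith
  refine ⟨Φ, hcc, ?_, ?_⟩
  · intro j k hjk
    -- reflection in the j-th coordinate
    let σ : Fin n → ℝ := fun i => if i = j then -1 else 1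
    have hσ : ∀ i, σ i * σ i = 1 := fun i => by simp only [σ]; split_ifs <;> norm_num
    have hσ0 : ∀ i, σ i ≠ 0 := fun i h => by have := hσ i; rw [h] at this; norm_num at this
    have hE := fun x i => hypE_apply σ 0 1 x i
    have hinv : (fun x => Φ (hypE σ 0 1 x)) = Φ := by
      funext x
      simp only [hΦ, hE]
      congr 1
      refine Finset.sum_congr rfl fun i _ => ?_
      linear_combination x i ^ 2 * hσ i
    have hpd : ∀ i x, pd i Φ x = σ i * pd i Φ (hypE σ 0 1 x) := by
      intro i x
      have := congrFun (hyp_pd_E σ 0 1 Φ hcc.diff i) x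
      rw [hinv] at this
      simpa [hypD] using this
    obtain ⟨c, hc, hcov⟩ := hyp_integral_comp (hypE σ 0 1) (hypE_inj σ hσ0 0 1 le_rfl one_pos)
    have h := hcov (fun x => pd j Φ x * pd k Φ x)
      (hyp_cc_mul (hyp_pd_cc hcc j) (hyp_pd_cc hcc k)).1.continuous
    have h' : ∀ x, pd j Φ (hypE σ 0 1 x) * pd k Φ (hypE σ 0 1 x) = -(pd j Φ x * pd k Φ x) := by
      intro x
      rw [hpd j x, hpd k x]
      have a1 : σ j = -1 := by simp [σ]
      have a2 : σ k = 1 := by simp [σ, hjk.symm]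
      rw [a1, a2]
      ring
    simp only [h', integral_neg] at h
    nlinarith
  · have hScc : IsCc (fun x => ∑ j, pd j Φ x ^ 2) := by
      simp only [sq]
      exact hyp_cc_sum _ fun j => hyp_cc_mul (hyp_pd_cc hcc j) (hyp_pd_cc hcc j)
    have hne : ∃ x, ∑ j, pd j Φ x ^ 2 ≠ 0 := by
      by_contra! hz
      have hd : ∀ x, fderiv ℝ Φ x = 0 := by
        intro x
        have h0 : ∀ j, pd j Φ x = 0 := by
          intro j
          have := (Finset.sum_eq_zero_iff_of_nonneg (fun i _ => sq_nonneg _)).1 (hz x) j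
            (Finset.mem_univ j)
          simpa using this
        ext y
        rw [← Finset.univ_sum_single y, map_sum]
        refine Finset.sum_eq_zero fun j _ => ?_
        have h4 : (Pi.single j (y j) : Fin n → ℝ) = y j • Pi.single j (1 : ℝ) := by
          rw [← Pi.single_smul, smul_eq_mul, mul_one]
        have h5 : fderiv ℝ Φ x (Pi.single j 1) = 0 := h0 j
        rw [h4, map_smul, h5, smul_zero]
      have hconst := is_const_of_fderiv_eq_zero (𝕜 := ℝ) hcc.diff hd 0 (fun _ => 2)
      have c1 : Φ 0 = 1 := by
        simp only [hΦ]
        apply f.one_of_mem_closedBall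
        simp [f]
      have c2 : Φ (fun _ => 2) = 0 := by
        simp only [hΦ]
        apply f.zero_of_le_dist
        have : (3 : ℝ) ≤ n := by exact_mod_cast hn
        simp [f]
        linarith
      rw [c1, c2] at hconst
      norm_num at hconst
    obtain ⟨x, hx⟩ := hne
    exact hScc.1.continuous.integral_pos_of_hasCompactSupport_nonneg_nonzero hScc.2
      (fun x => Finset.sum_nonneg fun j _ => sq_nonneg _) hx

/-- For `n ≥ 3`, the Hamiltonian second variation functional of the product of
hyperbolas `H^n_{r_1,…,r_n} ⊂ Dⁿ`,
`F(u) = ∫ (−(Σ ε_j ∂_j∂_j u)² − Σ (∂_j u)²/r_j² + 2 Σ_{j<k} ε_j ε_k ∂_j u ∂_k u/(r_j r_k))`,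
is indefinite on `C_c^∞(ℝⁿ)`. -/
theorem product_of_hyperbolas_H_unstable
    (n : ℕ) (hn : 3 ≤ n) (ε r : Fin n → ℝ)
    (hε : ∀ j, ε j = -1 ∨ ε j = 1) (hr : ∀ j, 0 < r j) :
    ∃ u v : (Fin n → ℝ) → ℝ, IsCc u ∧ IsCc v ∧
      0 < (∫ x, (-(∑ j, ε j * pd j (pd j u) x) ^ 2 - ∑ j, (pd j u x) ^ 2 / (r j) ^ 2
          + 2 * ∑ j, ∑ k, (if j < k then ε j * ε k * pd j u x * pd k u x / (r j * r k) else 0))) ∧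
      (∫ x, (-(∑ j, ε j * pd j (pd j v) x) ^ 2 - ∑ j, (pd j v x) ^ 2 / (r j) ^ 2
          + 2 * ∑ j, ∑ k, (if j < k then ε j * ε k * pd j v x * pd k v x / (r j * r k) else 0))) < 0 := by
  obtain ⟨Φ, hΦ, hcross, hpos⟩ := hyp_bump hn
  obtain ⟨A, hA, h1⟩ := hyp_key ε r hε hr Φ hΦ hcross 1 zero_le_one
  obtain ⟨A', hA', h0⟩ := hyp_key ε r hε hr Φ hΦ hcross 0 le_rfl
  set I := ∫ x, ∑ j, pd j Φ x ^ 2 with hI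
  have hn' : (3 : ℝ) ≤ n := by exact_mod_cast hn
  set K : ℝ := ((1 + n * 1) ^ 2 - 4 * 1 - 2 * n * 1 ^ 2 - 2) * I with hK
  have hKpos : 0 < K := by
    apply mul_pos _ hpos
    nlinarith
  have hs : ∃ s : ℝ, 0 < s ∧ s ^ 2 * A < K := by
    refine ⟨Real.sqrt (K / (A + 1)), by positivity, ?_⟩
    rw [Real.sq_sqrt (by positivity), div_mul_eq_mul_div, div_lt_iff₀ (by positivity)]
    nlinarith
  obtain ⟨s, hs0, hsK⟩ := hs
  obtain ⟨u, c, hu, hc, hFu⟩ := h1 s hs0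
  obtain ⟨v, d, hv, hd, hFv⟩ := h0 1 one_pos
  refine ⟨u, v, hu, hv, ?_, ?_⟩
  · rw [hFu]
    apply mul_pos hc
    have : 0 < s ^ 2 * (K - s ^ 2 * A) := mul_pos (by positivity) (by linarith)
    linarith
  · rw [hFv]
    apply mul_neg_of_pos_of_neg hd
    nlinarith
end

section
/- Let ε_1, ε_2 ∈ {−1, 1} and r_1, r_2 > 0. Then for every u ∈ C_c^∞(ℝ²) one has ∫_{ℝ²} ( −( ε_1 ∂_1∂_1 u + ε_2 ∂_2∂_2 u )² − (∂_1 u)²/r_1² − (∂_2 u)²/r_2² + 2 ε_1 ε_2 (∂_1 u)(∂_2 u)/(r_1 r_2) ) ≤ 0. -/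
open MeasureTheory Real

/-- Partial derivative of `u : ℝ² → ℝ` in the first coordinate. -/
noncomputable def pdS (u : ℝ × ℝ → ℝ) (x : ℝ × ℝ) : ℝ := fderiv ℝ u x (1, 0)

/-- Partial derivative of `u : ℝ² → ℝ` in the second coordinate. -/
noncomputable def pdT (u : ℝ × ℝ → ℝ) (x : ℝ × ℝ) : ℝ := fderiv ℝ u x (0, 1)

/-- Hamiltonian stability of the product of two hyperbolas `H²_{r₁,r₂} ⊂ D²`:
for every `u ∈ C_c^∞(ℝ²)` the second variation
`∫ (−(ε₁ ∂₁∂₁u + ε₂ ∂₂∂₂u)² − (∂₁u)²/r₁² − (∂₂u)²/r₂² + 2ε₁ε₂ ∂₁u ∂₂u/(r₁r₂))`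
is nonpositive. -/
theorem product_of_two_hyperbolas_H_stable
    (ε₁ ε₂ : ℝ) (hε₁ : ε₁ = -1 ∨ ε₁ = 1) (hε₂ : ε₂ = -1 ∨ ε₂ = 1)
    (r₁ r₂ : ℝ) (hr₁ : 0 < r₁) (hr₂ : 0 < r₂)
    (u : ℝ × ℝ → ℝ) (hu : ContDiff ℝ (⊤ : ℕ∞) u) (hc : HasCompactSupport u) :
    (∫ x, (-(ε₁ * pdS (pdS u) x + ε₂ * pdT (pdT u) x) ^ 2
        - (pdS u x) ^ 2 / r₁ ^ 2 - (pdT u x) ^ 2 / r₂ ^ 2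
        + 2 * ε₁ * ε₂ * (pdS u x) * (pdT u x) / (r₁ * r₂))) ≤ 0 := by
  refine integral_nonpos fun x => ?_
  have h1 : ε₁ ^ 2 = 1 := by rcases hε₁ with h | h <;> simp [h]
  have h2 : ε₂ ^ 2 = 1 := by rcases hε₂ with h | h <;> simp [h]
  -- the first-order part is minus a perfect square
  have key : (ε₁ * pdS u x / r₁ - ε₂ * pdT u x / r₂) ^ 2
      = (pdS u x) ^ 2 / r₁ ^ 2 + (pdT u x) ^ 2 / r₂ ^ 2
        - 2 * ε₁ * ε₂ * (pdS u x) * (pdT u x) / (r₁ * r₂) := by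
    calc _ = ε₁ ^ 2 * (pdS u x) ^ 2 / r₁ ^ 2 + ε₂ ^ 2 * (pdT u x) ^ 2 / r₂ ^ 2
        - 2 * ε₁ * ε₂ * (pdS u x) * (pdT u x) / (r₁ * r₂) := by
          field_simp
          ring
      _ = _ := by rw [h1, h2, one_mul, one_mul]
  have hA := sq_nonneg (ε₁ * pdS u x / r₁ - ε₂ * pdT u x / r₂)
  have hB := sq_nonneg (ε₁ * pdS (pdS u) x + ε₂ * pdT (pdT u) x)
  simp only [Pi.zero_apply]
  linarith
end

section
/- Let n ≥ 2 be an integer, let r_1, …, r_n > 0 and let ε_1, …, ε_n ∈ {−1, 1} be such that both values −1 and +1 occur among the ε_j. For a smooth function u : ℝⁿ → ℝ which is 2πr_j-periodic in the j-th variable for every j, set T(u) = ∫_{[0,2πr_1]×…×[0,2πr_n]} ( ( Σ_{j=1}^n ε_j ∂_j∂_j u )² − Σ_{j=1}^n (∂_j u)²/r_j² + 2 Σ_{1≤j<k≤n} ε_j ε_k (∂_j u)(∂_k u)/(r_j r_k) ). Then T is indefinite: there exist smooth functions u, v, each 2πr_j-periodic in the j-th variable for every j, with T(u) > 0 and T(v)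 < 0. -/
open MeasureTheory Real

lemma hl_pd {n : ℕ} (c : Fin n → ℝ) (j : Fin n) (f f' : ℝ → ℝ) (hf : ∀ t, HasDerivAt f (f' t) t) :
    pd j (fun x => f (∑ i, c i * x i)) = fun x => c j * f' (∑ i, c i * x i) := by
  funext x
  have h1 : HasFDerivAt (fun x : Fin n → ℝ => ∑ i, c i * x i)
      (∑ i, c i • (ContinuousLinearMap.proj i : (Fin n → ℝ) →L[ℝ] ℝ)) x := by
    apply HasFDerivAt.fun_sum
    intro i _
    exact (hasFDerivAt_apply i x).const_mul (c i)
  have h2 := (hf (∑ i, c i * x i)).comp_hasFDerivAt x h1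
  have h3 : pd j (fun x => f (∑ i, c i * x i)) x = _ := congrArg (fun L => L (Pi.single j 1)) h2.fderiv
  rw [h3]
  simp [Pi.single_apply, mul_comm]

lemma hl_pd1 {n : ℕ} (c : Fin n → ℝ) (j : Fin n) :
    pd j (fun x => cos (∑ i, c i * x i)) = fun x => c j * -sin (∑ i, c i * x i) :=
  hl_pd c j cos (fun t => -sin t) hasDerivAt_cos

lemma hl_pd2 {n : ℕ} (c : Fin n → ℝ) (j : Fin n) :
    pd j (pd j (fun x => cos (∑ i, c i * x i))) =
      fun x => c j * (c j * -cos (∑ i, c i * x i)) := by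
  rw [hl_pd1]
  exact hl_pd c j (fun t => c j * -sin t) (fun t => c j * -cos t)
    (fun t => ((hasDerivAt_sin t).neg).const_mul (c j))

lemma hl_int {n : ℕ} (r : Fin n → ℝ) (hr : ∀ j, 0 < r j) (m : Fin n → ℤ) (p : Fin n)
    (hp : m p ≠ 0) :
    ∫ x in Set.univ.pi (fun j => Set.Icc (0 : ℝ) (2 * π * r j)),
      cos (2 * ∑ i, (m i / r i : ℝ) * x i) = 0 := by
  have key : ∫ x in Set.univ.pi (fun j => Set.Icc (0 : ℝ) (2 * π * r j)),
      ∏ i, Complex.exp ((2 * (m i / r i) * Complex.I : ℂ) * (x i : ℂ)) = 0 := by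
    rw [volume_pi, Measure.restrict_pi_pi,
      integral_fintype_prod_eq_prod (𝕜 := ℂ)
        (fun i (y : ℝ) => Complex.exp ((2 * (m i / r i) * Complex.I : ℂ) * (y : ℂ)))]
    apply Finset.prod_eq_zero (Finset.mem_univ p)
    have hrp := hr p
    have hrc : (r p : ℂ) ≠ 0 := by exact_mod_cast hrp.ne'
    have hmc : (m p : ℂ) ≠ 0 := by exact_mod_cast hp
    rw [integral_Icc_eq_integral_Ioc, ← intervalIntegral.integral_of_le (by positivity),
      integral_exp_mul_complex (by simp [hrc, hmc])]
    have : (2 * (m p / r p) * Complex.I : ℂ) * ((2 * π * r p : ℝ) : ℂ)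
        = ((2 * m p : ℤ) : ℂ) * (2 * π * Complex.I) := by
      push_cast
      field_simp
    rw [this, Complex.exp_int_mul_two_pi_mul_I]
    simp
  have h2 : ∀ x : Fin n → ℝ, cos (2 * ∑ i, (m i / r i : ℝ) * x i) =
      RCLike.re (∏ i, Complex.exp ((2 * (m i / r i) * Complex.I : ℂ) * (x i : ℂ))) := by
    intro x
    rw [← Complex.exp_sum]
    have : ∑ i, (2 * (m i / r i) * Complex.I : ℂ) * (x i : ℂ) =
        ((2 * ∑ i, (m i / r i : ℝ) * x i : ℝ) : ℂ) * Complex.I := by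
      push_cast
      rw [Finset.mul_sum, Finset.sum_mul]
      exact Finset.sum_congr rfl fun i _ => by ring
    rw [this]
    exact (Complex.exp_ofReal_mul_I_re _).symm
  simp_rw [h2]
  rw [integral_re, key]
  · simp
  · apply ContinuousOn.integrableOn_compact
    · exact isCompact_univ_pi fun _ => isCompact_Icc
    · fun_prop

lemma hl_sq {n : ℕ} (d : Fin n → ℝ) :
    2 * ∑ j, ∑ k, (if j < k then d j * d k else 0) = (∑ j, d j) ^ 2 - ∑ j, d j ^ 2 := by
  have h1 : ∑ j, ∑ k, (if j < k then d j * d k else 0) =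
      ∑ j, ∑ k, (if k < j then d j * d k else 0) := by
    rw [Finset.sum_comm]
    exact Finset.sum_congr rfl fun i _ => Finset.sum_congr rfl fun k _ => by rw [mul_comm]
  have h2 : ∑ j, d j ^ 2 = ∑ j, ∑ k, (if j = k then d j * d k else 0) := by
    simp [sq]
  rw [two_mul]
  nth_rewrite 2 [h1]
  rw [h2, sq, Finset.sum_mul_sum, eq_sub_iff_add_eq, ← Finset.sum_add_distrib,
    ← Finset.sum_add_distrib]
  refine Finset.sum_congr rfl fun j _ => ?_
  rw [← Finset.sum_add_distrib, ← Finset.sum_add_distrib]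
  refine Finset.sum_congr rfl fun k _ => ?_
  rcases lt_trichotomy j k with h | h | h
  · simp [h, h.ne, h.not_gt]
  · simp [h]
  · simp [h, h.ne', h.not_gt]

lemma hl_main {n : ℕ} (r ε : Fin n → ℝ) (hr : ∀ j, 0 < r j)
    (hε : ∀ j, ε j = -1 ∨ ε j = 1) (m : Fin n → ℤ) (p : Fin n) (hp : m p ≠ 0) :
    ∃ V : ℝ, 0 < V ∧ ∫ x in Set.univ.pi (fun j => Set.Icc (0 : ℝ) (2 * π * r j)),
        ((∑ j, ε j * pd j (pd j (fun x => cos (∑ i, (m i / r i : ℝ) * x i))) x) ^ 2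
          - ∑ j, (pd j (fun x => cos (∑ i, (m i / r i : ℝ) * x i)) x) ^ 2 / (r j) ^ 2
          + 2 * ∑ j, ∑ k, (if j < k then ε j * ε k
            * pd j (fun x => cos (∑ i, (m i / r i : ℝ) * x i)) x
            * pd k (fun x => cos (∑ i, (m i / r i : ℝ) * x i)) x / (r j * r k) else 0))
      = V * ((∑ j, ε j * (m j / r j) ^ 2) ^ 2 + (∑ j, ε j * m j / r j ^ 2) ^ 2
          - 2 * ∑ j, (m j / r j ^ 2 : ℝ) ^ 2) := by
  set A := ∑ j, ε j * (m j / r j : ℝ) ^ 2 with hA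
  set S := ∑ j, ε j * m j / r j ^ 2 with hS
  set D := ∑ j, (m j / r j ^ 2 : ℝ) ^ 2 with hD
  have hε2 : ∀ j, ε j ^ 2 = 1 := fun j => by rcases hε j with h | h <;> simp [h]
  have hint : ∀ x : Fin n → ℝ,
        ((∑ j, ε j * pd j (pd j (fun x => cos (∑ i, (m i / r i : ℝ) * x i))) x) ^ 2
          - ∑ j, (pd j (fun x => cos (∑ i, (m i / r i : ℝ) * x i)) x) ^ 2 / (r j) ^ 2
          + 2 * ∑ j, ∑ k, (if j < k then ε j * ε k
            * pd j (fun x => cos (∑ i, (m i / r i : ℝ) * x i)) x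
            * pd k (fun x => cos (∑ i, (m i / r i : ℝ) * x i)) x / (r j * r k) else 0))
      = (A ^ 2 + S ^ 2 - 2 * D) / 2 +
        (A ^ 2 - (S ^ 2 - 2 * D)) / 2 * cos (2 * ∑ i, (m i / r i : ℝ) * x i) := by
    intro x
    simp only [hl_pd2 (fun i => (m i / r i : ℝ))]
    simp only [hl_pd1 (fun i => (m i / r i : ℝ))]
    set t := ∑ i, (m i / r i : ℝ) * x i
    have e1 : ∑ j, ε j * ((m j / r j : ℝ) * ((m j / r j : ℝ) * -cos t)) = A * -cos t := by
      rw [hA, Finset.sum_mul]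
      exact Finset.sum_congr rfl fun i _ => by ring
    have e2 : ∑ j, ((m j / r j : ℝ) * -sin t) ^ 2 / r j ^ 2 = D * sin t ^ 2 := by
      rw [hD, Finset.sum_mul]
      exact Finset.sum_congr rfl fun i _ => by
        have := (hr i).ne'
        field_simp
    have e3 := hl_sq (fun j => ε j * m j / r j ^ 2 * sin t)
    have e4 : ∑ j, (ε j * m j / r j ^ 2 * sin t) ^ 2 = D * sin t ^ 2 := by
      rw [hD, Finset.sum_mul]
      exact Finset.sum_congr rfl fun i _ => by
        rw [mul_pow, div_pow, mul_pow, hε2, one_mul, div_pow]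
    have e5 : ∑ j, ∑ k, (if j < k then ε j * ε k * ((m j / r j : ℝ) * -sin t)
        * ((m k / r k : ℝ) * -sin t) / (r j * r k) else 0) =
        ∑ j, ∑ k, (if j < k then (ε j * m j / r j ^ 2 * sin t) * (ε k * m k / r k ^ 2 * sin t)
          else 0) := by
      refine Finset.sum_congr rfl fun j _ => Finset.sum_congr rfl fun k _ => ?_
      have := (hr j).ne'
      have := (hr k).ne'
      split_ifs
      · field_simp
      · rfl
    rw [e1, e2, e5, e3, e4, ← Finset.sum_mul, ← hS, cos_two_mul]
    have := sin_sq t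
    rw [mul_pow S, this]
    ring
  refine ⟨(volume.real (Set.univ.pi (fun j => Set.Icc (0 : ℝ) (2 * π * r j)))) / 2, ?_, ?_⟩
  · have : volume.real (Set.univ.pi (fun j => Set.Icc (0 : ℝ) (2 * π * r j)))
        = ∏ j, (2 * π * r j) := by
      rw [measureReal_def, volume_pi_pi, ENNReal.toReal_prod]
      refine Finset.prod_congr rfl fun j _ => ?_
      have := hr j
      rw [Real.volume_Icc, sub_zero, ENNReal.toReal_ofReal (by positivity)]
    rw [this]
    have : 0 < ∏ j, (2 * π * r j) := Finset.prod_pos fun j _ => by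
      have := hr j
      positivity
    positivity
  · simp_rw [hint]
    have hc : IsCompact (Set.univ.pi (fun j => Set.Icc (0 : ℝ) (2 * π * r j))) :=
      isCompact_univ_pi fun _ => isCompact_Icc
    rw [integral_add, integral_const_mul, hl_int r hr m p hp, setIntegral_const, smul_eq_mul]
    · ring
    · exact ContinuousOn.integrableOn_compact hc (by fun_prop)
    · exact ContinuousOn.integrableOn_compact hc (by fun_prop)

lemma hl_smooth {n : ℕ} (c : Fin n → ℝ) :
    ContDiff ℝ (⊤ : ℕ∞) (fun x : Fin n → ℝ => cos (∑ i, c i * x i)) := by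
  fun_prop

lemma hl_per {n : ℕ} (r : Fin n → ℝ) (hr : ∀ j, 0 < r j) (m : Fin n → ℤ) (j : Fin n)
    (x : Fin n → ℝ) :
    (fun x : Fin n → ℝ => cos (∑ i, (m i / r i : ℝ) * x i)) (x + Pi.single j (2 * π * r j))
      = (fun x : Fin n → ℝ => cos (∑ i, (m i / r i : ℝ) * x i)) x := by
  have : ∑ i, (m i / r i : ℝ) * (x + Pi.single j (2 * π * r j) : Fin n → ℝ) i
      = ∑ i, (m i / r i : ℝ) * x i + m j * (2 * π) := by
    simp only [Pi.add_apply, mul_add, Finset.sum_add_distrib]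
    congr 1
    have := (hr j).ne'
    simp [Pi.single_apply]
    field_simp
  simp only [this]
  exact cos_add_int_mul_two_pi _ _

/-- Hamiltonian instability of the torus `S¹(r₁) × … × S¹(rₙ) ⊂ ℂⁿ` with an
indefinite flat Hermitian form (both signs occur among the `ε j`): the second variation
functional `T` is indefinite on smooth functions that are `2πr_j`-periodic in each variable. -/
theorem product_of_circles_H_unstable
    (n : ℕ) (hn : 2 ≤ n) (r ε : Fin n → ℝ) (hr : ∀ j, 0 < r j)
    (hε : ∀ j, ε j = -1 ∨ ε j = 1) (hneg : ∃ j, ε j = -1) (hpos : ∃ j, ε j = 1)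
    (T : ((Fin n → ℝ) → ℝ) → ℝ)
    (hT : ∀ u, T u = ∫ x in Set.univ.pi (fun j => Set.Icc (0 : ℝ) (2 * π * r j)),
        ((∑ j, ε j * pd j (pd j u) x) ^ 2 - ∑ j, (pd j u x) ^ 2 / (r j) ^ 2
          + 2 * ∑ j, ∑ k, (if j < k then ε j * ε k * pd j u x * pd k u x / (r j * r k) else 0))) :
    ∃ u v : (Fin n → ℝ) → ℝ, ContDiff ℝ (⊤ : ℕ∞) u ∧ ContDiff ℝ (⊤ : ℕ∞) v ∧
      (∀ j x, u (x + Pi.single j (2 * π * r j)) = u x) ∧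
      (∀ j x, v (x + Pi.single j (2 * π * r j)) = v x) ∧
      0 < T u ∧ T v < 0 := by
  obtain ⟨q, hq⟩ := hneg
  obtain ⟨p, hp⟩ := hpos
  have hpq : p ≠ q := by
    rintro rfl
    norm_num [hp] at hq
  obtain ⟨V, hV, hu⟩ := hl_main r ε hr hε (Pi.single p 2) p (by simp)
  obtain ⟨W, hW, hv⟩ := hl_main r ε hr hε (Pi.single p 1 + Pi.single q 1) p (by simp [hpq])
  refine ⟨_, _, hl_smooth _, hl_smooth _, hl_per r hr (Pi.single p 2),
    hl_per r hr (Pi.single p 1 + Pi.single q 1), ?_, ?_⟩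
  · rw [hT, hu]
    apply mul_pos hV
    have h0 : ∀ x, x ≠ p → (Pi.single p 2 : Fin n → ℤ) x = 0 := fun x hx => by simp [hx]
    rw [Fintype.sum_eq_single p (fun x hx => by simp [h0 x hx]),
      Fintype.sum_eq_single p (fun x hx => by simp [h0 x hx]),
      Fintype.sum_eq_single p (fun x hx => by simp [h0 x hx])]
    have := hr p
    simp only [Pi.single_eq_same, hp]
    push_cast
    have : (1 * (2 / r p) ^ 2) ^ 2 + (1 * 2 / r p ^ 2) ^ 2 - 2 * (2 / r p ^ 2) ^ 2
        = 12 / r p ^ 4 := by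
      field_simp
      norm_num
    rw [this]
    positivity
  · rw [hT, hv]
    apply mul_neg_of_pos_of_neg hW
    have h0 : ∀ x, x ≠ p ∧ x ≠ q → (Pi.single p 1 + Pi.single q 1 : Fin n → ℤ) x = 0 :=
      fun x hx => by simp [hx.1, hx.2]
    rw [Fintype.sum_eq_add p q hpq (fun x hx => by simp [h0 x hx]),
      Fintype.sum_eq_add p q hpq (fun x hx => by simp [h0 x hx]),
      Fintype.sum_eq_add p q hpq (fun x hx => by simp [h0 x hx])]
    have h1 : (Pi.single p 1 + Pi.single q 1 : Fin n → ℤ) p = 1 := by simp [hpq]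
    have h2 : (Pi.single p 1 + Pi.single q 1 : Fin n → ℤ) q = 1 := by simp [hpq.symm]
    have := hr p
    have := hr q
    rw [h1, h2, hp, hq]
    push_cast
    have : (1 * (1 / r p) ^ 2 + -1 * (1 / r q) ^ 2) ^ 2
        + (1 * 1 / r p ^ 2 + -1 * 1 / r q ^ 2) ^ 2
        - 2 * ((1 / r p ^ 2) ^ 2 + (1 / r q ^ 2) ^ 2)
        = -(4 / (r p ^ 2 * r q ^ 2)) := by
      field_simp
      ring
    rw [this]
    exact neg_lt_zero.mpr (by positivity)
end

section
/- Let n ≥ 1, r_1, …, r_n > 0, ε_1, …, ε_n ∈ {−1, 1}, and let k ≥ 2 be an integer. For u(s_1, …, s_n) = cos(k s_1 / r_1) one has ∫_{[0,2πr_1]×…×[0,2πr_n]} ( ( Σ_{j=1}^n ε_j ∂_j∂_j u )² − Σ_{j=1}^n (∂_j u)²/r_j² + 2 Σ_{1≤j<k≤n} ε_j ε_k (∂_j u)(∂_k u)/(r_j r_k) ) = ( Π_{j=2}^n 2π r_j ) · π (k⁴ − k²)/r_1³, and this value is strictly positive. -/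
open MeasureTheory Real

lemma pd_of_zero {n : ℕ} (g g' : ℝ → ℝ) (hg : ∀ t, HasDerivAt g (g' t) t) (j : Fin (n + 1)) :
    pd j (fun x : Fin (n + 1) → ℝ => g (x 0)) = fun x => if j = 0 then g' (x 0) else 0 := by
  funext x
  have h0 : HasFDerivAt (fun x : Fin (n + 1) → ℝ => x 0)
      (ContinuousLinearMap.proj (R := ℝ) (φ := fun _ : Fin (n + 1) => ℝ) 0) x :=
    (ContinuousLinearMap.proj (R := ℝ) (φ := fun _ : Fin (n + 1) => ℝ) 0).hasFDerivAt
  have h := (hg (x 0)).comp_hasFDerivAt x h0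
  have h2 : fderiv ℝ (fun x : Fin (n + 1) → ℝ => g (x 0)) x = _ := h.fderiv
  unfold pd
  rw [h2]
  by_cases hj : j = 0
  · subst hj; simp
  · simp [hj, Pi.single_apply, Ne.symm hj]

lemma pd_zero_fun {n : ℕ} (j : Fin n) : pd j (fun _ => (0 : ℝ)) = fun _ => 0 := by
  funext x; simp [pd]

lemma integral_aux (a A B R : ℝ) (ha : a ≠ 0) (hR : 0 ≤ R) (hs : Real.sin (a * R) = 0) :
    ∫ t in Set.Icc 0 R, (A * Real.cos (a * t) ^ 2 - B * Real.sin (a * t) ^ 2)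
      = (A - B) / 2 * R := by
  rw [integral_Icc_eq_integral_Ioc, ← intervalIntegral.integral_of_le hR]
  have hd : ∀ t ∈ Set.uIcc 0 R, HasDerivAt
      (fun t => (A - B) / 2 * t + (A + B) / (2 * a) * (Real.sin (a * t) * Real.cos (a * t)))
      (A * Real.cos (a * t) ^ 2 - B * Real.sin (a * t) ^ 2) t := by
    intro t _
    have h1 : HasDerivAt (fun t => a * t) a t := by simpa using (hasDerivAt_id t).const_mul a
    have h := ((hasDerivAt_id t).const_mul ((A - B) / 2)).add
      ((h1.sin.mul h1.cos).const_mul ((A + B) / (2 * a)))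
    refine h.congr_deriv ?_
    have hc := Real.sin_sq_add_cos_sq (a * t)
    field_simp
    linear_combination (-(A - B)) * hc
  rw [intervalIntegral.integral_eq_sub_of_hasDerivAt hd
    (Continuous.intervalIntegrable (by fun_prop) _ _)]
  simp [hs]

/-- For the test function `u = cos(m s₁/r₁)` with integer `m ≥ 2`, the second
variation of the volume of the torus `S¹(r₁) × … × S¹(rₙ)` (here with `n + 1 ≥ 1` factors)
equals `(Π_{j≥2} 2π r_j) · π(m⁴ − m²)/r₁³`, which is strictly positive. -/
theorem torus_second_variation_positive_direction
    (n : ℕ) (r ε : Fin (n + 1) → ℝ) (hr : ∀ j, 0 < r j)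
    (hε : ∀ j, ε j = -1 ∨ ε j = 1) (m : ℕ) (hm : 2 ≤ m)
    (u : (Fin (n + 1) → ℝ) → ℝ)
    (hu : u = fun x => Real.cos ((m : ℝ) * x 0 / r 0)) :
    (∫ x in Set.univ.pi (fun j => Set.Icc (0 : ℝ) (2 * π * r j)),
        ((∑ j, ε j * pd j (pd j u) x) ^ 2 - ∑ j, (pd j u x) ^ 2 / (r j) ^ 2
          + 2 * ∑ j, ∑ k, (if j < k then ε j * ε k * pd j u x * pd k u x / (r j * r k) else 0)))
      = (∏ j ∈ Finset.univ.erase (0 : Fin (n + 1)), (2 * π * r j))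
          * (π * ((m : ℝ) ^ 4 - (m : ℝ) ^ 2) / (r 0) ^ 3) ∧
    0 < (∏ j ∈ Finset.univ.erase (0 : Fin (n + 1)), (2 * π * r j))
          * (π * ((m : ℝ) ^ 4 - (m : ℝ) ^ 2) / (r 0) ^ 3) := by
  have hr0 := hr 0
  have hm' : (2 : ℝ) ≤ m := by exact_mod_cast hm
  have ha : (m : ℝ) / r 0 ≠ 0 := by positivity
  have hprod : 0 < ∏ j ∈ Finset.univ.erase (0 : Fin (n + 1)), (2 * π * r j) :=
    Finset.prod_pos fun j _ => by have := hr j; positivity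
  refine ⟨?_, ?_⟩
  swap
  · have : 0 < (m : ℝ) ^ 4 - (m : ℝ) ^ 2 := by
      have h4 : (4 : ℝ) ≤ (m : ℝ) ^ 2 := by nlinarith
      nlinarith
    positivity
  set a : ℝ := (m : ℝ) / r 0 with hadef
  have hu' : u = fun x => (fun t => Real.cos (a * t)) (x 0) := by
    rw [hu]; funext x; simp only [hadef]; congr 1; ring
  have hl : ∀ t : ℝ, HasDerivAt (fun t => a * t) a t := fun t => by
    simpa using (hasDerivAt_id t).const_mul a
  have p1 : ∀ j, pd j u = fun x => if j = 0 then -Real.sin (a * x 0) * a else 0 := fun j => by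
    rw [hu']
    exact pd_of_zero (fun t => Real.cos (a * t)) (fun t => -Real.sin (a * t) * a)
      (fun t => (hl t).cos) j
  have p2 : ∀ j, pd j (pd j u) = fun x => if j = 0 then -(Real.cos (a * x 0) * a) * a else 0 :=
    fun j => by
    rw [p1]
    by_cases hj : j = 0
    · simp only [hj, if_true]
      have := pd_of_zero (fun t => -Real.sin (a * t) * a) (fun t => -(Real.cos (a * t) * a) * a)
        (fun t => ((hl t).sin.neg).mul_const a) (0 : Fin (n + 1))
      simpa using this
    · simp only [hj, if_false]
      exact pd_zero_fun j
  have hε0 : ε 0 ^ 2 = 1 := by rcases hε 0 with h | h <;> rw [h] <;> norm_num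
  let g : ℝ → ℝ := fun t => a ^ 4 * Real.cos (a * t) ^ 2 - (a ^ 2 / r 0 ^ 2) * Real.sin (a * t) ^ 2
  let f : Fin (n + 1) → ℝ → ℝ := fun j => if j = 0 then g else fun _ => 1
  have hint : ∀ x : Fin (n + 1) → ℝ,
      ((∑ j, ε j * pd j (pd j u) x) ^ 2 - ∑ j, (pd j u x) ^ 2 / (r j) ^ 2
          + 2 * ∑ j, ∑ k, (if j < k then ε j * ε k * pd j u x * pd k u x / (r j * r k) else 0))
        = ∏ j, f j (x j) := by
    intro x
    have e1 : ∑ j, ε j * pd j (pd j u) x = ε 0 * (-(Real.cos (a * x 0) * a) * a) := by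
      simp [p2]
    have e2 : ∑ j, (pd j u x) ^ 2 / (r j) ^ 2 = (-Real.sin (a * x 0) * a) ^ 2 / r 0 ^ 2 := by
      rw [Finset.sum_eq_single 0]
      · simp [p1]
      · intro j _ hj; simp [p1, hj]
      · simp
    have e3 : ∑ j, ∑ k, (if j < k then ε j * ε k * pd j u x * pd k u x / (r j * r k) else 0)
        = 0 := by
      refine Finset.sum_eq_zero fun j _ => Finset.sum_eq_zero fun k _ => ?_
      split_ifs with h
      · have hk : k ≠ 0 := by rintro rfl; exact absurd h (Fin.not_lt_zero j)
        simp [p1, hk]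
      · rfl
    have e4 : ∏ j, f j (x j) = g (x 0) := by
      rw [Finset.prod_eq_single 0]
      · simp [f]
      · intro j _ hj; simp [f, hj]
      · simp
    rw [e1, e2, e3, e4]
    simp only [g]
    linear_combination (Real.cos (a * x 0) ^ 2 * a ^ 4) * hε0
  simp_rw [hint]
  rw [volume_pi, Measure.restrict_pi_pi, integral_fintype_prod_eq_prod,
    ← Finset.mul_prod_erase _ _ (Finset.mem_univ (0 : Fin (n + 1))), mul_comm]
  congr 1
  · refine Finset.prod_congr rfl fun j hj => ?_
    have hj0 : j ≠ 0 := Finset.ne_of_mem_erase hj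
    have := hr j
    have h2 : 0 ≤ 2 * π * r j := by positivity
    simp [f, hj0, h2]
  · have hs : Real.sin (a * (2 * π * r 0)) = 0 := by
      have : a * (2 * π * r 0) = ((2 * m : ℕ) : ℝ) * π := by
        rw [hadef]; push_cast; field_simp
      rw [this]; exact Real.sin_nat_mul_pi _
    have := integral_aux a (a ^ 4) (a ^ 2 / r 0 ^ 2) (2 * π * r 0) ha (by positivity) hs
    simp only [f, if_true, g]
    rw [this, hadef]
    field_simp
end

section
/- Let r_1, r_2 > 0 and let a, b be positive integers with a r_2 = b r_1. Let F : ℝ → ℝ be a smooth 2π-periodic function and define u(s_1, s_2) = F(a s_1/r_1 + b s_2/r_2). Then ∂_1∂_1 u − ∂_2∂_2 u vanishes identically, and ∫_{[0,2πr_1]×[0,2πr_2]} ( ( ∂_1∂_1 u − ∂_2∂_2 u )² − (∂_1 u)²/r_1² − (∂_2 u)²/r_2² − 2 (∂_1 u)(∂_2 u)/(r_1 r_2) ) = − ( a/r_1² + b/r_2² )² ∫_{[0,2πr_1]×[0,2πr_2]} F′(a s_1/r_1 + b s_2/r_2)². In particular this quantity is strictly negative whenever F is non-constant. -/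
open MeasureTheory Real

lemma pd_aux (p q r₁ r₂ : ℝ) (G : ℝ → ℝ) (hG : Differentiable ℝ G) (x v : ℝ × ℝ) :
    fderiv ℝ (fun x : ℝ × ℝ => G (p * x.1 / r₁ + q * x.2 / r₂)) x v
      = (p * v.1 / r₁ + q * v.2 / r₂) * deriv G (p * x.1 / r₁ + q * x.2 / r₂) := by
  have h1 : HasFDerivAt (fun x : ℝ × ℝ => p * x.1 / r₁ + q * x.2 / r₂)
      ((p / r₁) • ContinuousLinearMap.fst ℝ ℝ ℝ + (q / r₂) • ContinuousLinearMap.snd ℝ ℝ ℝ) x := by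
    have := ((p / r₁) • ContinuousLinearMap.fst ℝ ℝ ℝ
      + (q / r₂) • ContinuousLinearMap.snd ℝ ℝ ℝ).hasFDerivAt (x := x)
    refine this.congr_of_eventuallyEq (Filter.Eventually.of_forall fun y => ?_)
    simp
    ring
  have h2 := (hG (p * x.1 / r₁ + q * x.2 / r₂)).hasDerivAt.comp_hasFDerivAt x h1
  have h3 := h2.fderiv
  simp only [Function.comp_def] at h3
  rw [h3]
  simp
  ring

lemma pdS_aux (p q r₁ r₂ : ℝ) (G : ℝ → ℝ) (hG : Differentiable ℝ G) :
    pdS (fun x : ℝ × ℝ => G (p * x.1 / r₁ + q * x.2 / r₂))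
      = fun x => p / r₁ * deriv G (p * x.1 / r₁ + q * x.2 / r₂) := by
  funext x
  rw [pdS, pd_aux p q r₁ r₂ G hG]
  simp

lemma pdT_aux (p q r₁ r₂ : ℝ) (G : ℝ → ℝ) (hG : Differentiable ℝ G) :
    pdT (fun x : ℝ × ℝ => G (p * x.1 / r₁ + q * x.2 / r₂))
      = fun x => q / r₂ * deriv G (p * x.1 / r₁ + q * x.2 / r₂) := by
  funext x
  rw [pdT, pd_aux p q r₁ r₂ G hG]
  simp

/-- Negative direction for the torus `S¹(r₁) × S¹(r₂) ⊂ ℂ²` with the neutral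
Hermitian form, coming from solutions `u(s₁,s₂) = F(a s₁/r₁ + b s₂/r₂)` of the wave equation:
`∂₁∂₁u − ∂₂∂₂u ≡ 0`, the second variation equals
`−(a/r₁² + b/r₂²)² ∫ F′(a s₁/r₁ + b s₂/r₂)²`, and it is strictly negative if `F` is
non-constant. -/
theorem torus_second_variation_negative_direction
    (r₁ r₂ : ℝ) (hr₁ : 0 < r₁) (hr₂ : 0 < r₂)
    (a b : ℕ) (ha : 0 < a) (hb : 0 < b) (hab : (a : ℝ) * r₂ = (b : ℝ) * r₁)
    (F : ℝ → ℝ) (hF : ContDiff ℝ (⊤ : ℕ∞) F) (hFper : Function.Periodic F (2 * π))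
    (u : ℝ × ℝ → ℝ) (hu : u = fun x => F ((a : ℝ) * x.1 / r₁ + (b : ℝ) * x.2 / r₂)) :
    (∀ x, pdS (pdS u) x - pdT (pdT u) x = 0) ∧
    (∫ x in Set.Icc (0 : ℝ) (2 * π * r₁) ×ˢ Set.Icc (0 : ℝ) (2 * π * r₂),
        ((pdS (pdS u) x - pdT (pdT u) x) ^ 2 - (pdS u x) ^ 2 / r₁ ^ 2
          - (pdT u x) ^ 2 / r₂ ^ 2 - 2 * (pdS u x) * (pdT u x) / (r₁ * r₂)))
      = -((a : ℝ) / r₁ ^ 2 + (b : ℝ) / r₂ ^ 2) ^ 2 *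
          ∫ x in Set.Icc (0 : ℝ) (2 * π * r₁) ×ˢ Set.Icc (0 : ℝ) (2 * π * r₂),
            (deriv F ((a : ℝ) * x.1 / r₁ + (b : ℝ) * x.2 / r₂)) ^ 2 ∧
    ((¬ ∃ c : ℝ, ∀ s, F s = c) →
      (∫ x in Set.Icc (0 : ℝ) (2 * π * r₁) ×ˢ Set.Icc (0 : ℝ) (2 * π * r₂),
        ((pdS (pdS u) x - pdT (pdT u) x) ^ 2 - (pdS u x) ^ 2 / r₁ ^ 2
          - (pdT u x) ^ 2 / r₂ ^ 2 - 2 * (pdS u x) * (pdT u x) / (r₁ * r₂))) < 0) := by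
  have hF1 : Differentiable ℝ F := hF.differentiable (by simp)
  have hF' : ContDiff ℝ (⊤ : ℕ∞) (deriv F) := by
    have := contDiff_infty_iff_deriv.1 hF
    exact this.2
  have hF2 : Differentiable ℝ (deriv F) := hF'.differentiable (by simp)
  have hS : pdS u = fun x => (a : ℝ) / r₁ * deriv F ((a : ℝ) * x.1 / r₁ + (b : ℝ) * x.2 / r₂) := by
    rw [hu, pdS_aux _ _ _ _ F hF1]
  have hT : pdT u = fun x => (b : ℝ) / r₂ * deriv F ((a : ℝ) * x.1 / r₁ + (b : ℝ) * x.2 / r₂) := by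
    rw [hu, pdT_aux _ _ _ _ F hF1]
  have hSS := pdS_aux a b r₁ r₂ (fun t => (a : ℝ) / r₁ * deriv F t) (hF2.const_mul _)
  have hTT := pdT_aux a b r₁ r₂ (fun t => (b : ℝ) / r₂ * deriv F t) (hF2.const_mul _)
  have hk : (b : ℝ) / r₂ = a / r₁ := by
    field_simp
    linarith
  have hwave : ∀ x, pdS (pdS u) x - pdT (pdT u) x = 0 := by
    intro x
    rw [hS, hT, hSS, hTT]
    simp only [hk]
    ring
  have hint : (∫ x in Set.Icc (0 : ℝ) (2 * π * r₁) ×ˢ Set.Icc (0 : ℝ) (2 * π * r₂),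
        ((pdS (pdS u) x - pdT (pdT u) x) ^ 2 - (pdS u x) ^ 2 / r₁ ^ 2
          - (pdT u x) ^ 2 / r₂ ^ 2 - 2 * (pdS u x) * (pdT u x) / (r₁ * r₂)))
      = -((a : ℝ) / r₁ ^ 2 + (b : ℝ) / r₂ ^ 2) ^ 2 *
          ∫ x in Set.Icc (0 : ℝ) (2 * π * r₁) ×ˢ Set.Icc (0 : ℝ) (2 * π * r₂),
            (deriv F ((a : ℝ) * x.1 / r₁ + (b : ℝ) * x.2 / r₂)) ^ 2 := by
    rw [← integral_const_mul]
    congr 1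
    funext x
    rw [hwave x, hS, hT]
    field_simp
    ring
  refine ⟨hwave, hint, fun hnc => ?_⟩
  rw [hint]
  have hapos : (0 : ℝ) < a := by exact_mod_cast ha
  have hbpos : (0 : ℝ) < b := by exact_mod_cast hb
  have ha1 : (1 : ℝ) ≤ a := by exact_mod_cast ha
  have hb1 : (1 : ℝ) ≤ b := by exact_mod_cast hb
  have hcoef : 0 < ((a : ℝ) / r₁ ^ 2 + (b : ℝ) / r₂ ^ 2) ^ 2 := by positivity
  have hcont : Continuous fun x : ℝ × ℝ =>
      (deriv F ((a : ℝ) * x.1 / r₁ + (b : ℝ) * x.2 / r₂)) ^ 2 := by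
    have := hF2.continuous
    fun_prop
  have hpi := Real.pi_pos
  obtain ⟨t, ht⟩ : ∃ t, deriv F t ≠ 0 := by
    by_contra! h
    exact hnc ⟨F 0, fun s => is_const_of_deriv_eq_zero hF1 h s 0⟩
  have hper : Function.Periodic (deriv F) (2 * π) := by
    intro s
    rw [← deriv_comp_add_const]
    congr 1
    funext y
    exact hFper y
  obtain ⟨t₀, ht₀, hte⟩ := hper.exists_mem_Ioc (by positivity) t 0
  rw [hte] at ht
  have hpos : 0 < ∫ x in Set.Icc (0 : ℝ) (2 * π * r₁) ×ˢ Set.Icc (0 : ℝ) (2 * π * r₂),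
            (deriv F ((a : ℝ) * x.1 / r₁ + (b : ℝ) * x.2 / r₂)) ^ 2 := by
    rw [setIntegral_pos_iff_support_of_nonneg_ae
      (Filter.Eventually.of_forall fun x => by positivity)
      (hcont.continuousOn.integrableOn_compact (isCompact_Icc.prod isCompact_Icc))]
    have hopen := hcont.isOpen_support.inter
      ((isOpen_Ioo (a := (0 : ℝ)) (b := 2 * π * r₁)).prod
        (isOpen_Ioo (a := (0 : ℝ)) (b := 2 * π * r₂)))
    refine lt_of_lt_of_le (hopen.measure_pos volume ?_)
      (measure_mono (Set.inter_subset_inter_right _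
        (Set.prod_mono Set.Ioo_subset_Icc_self Set.Ioo_subset_Icc_self)))
    have h0 : 0 < t₀ / (a + b) := div_pos ht₀.1 (by positivity)
    have h1 : t₀ / (a + b) < 2 * π := by
      rw [div_lt_iff₀ (by positivity)]
      have := ht₀.2
      nlinarith
    refine ⟨(t₀ / (a + b) * r₁, t₀ / (a + b) * r₂), ?_, ⟨by positivity, ?_⟩, ⟨by positivity, ?_⟩⟩
    · rw [Function.mem_support]
      have : (a : ℝ) * (t₀ / (a + b) * r₁) / r₁ + b * (t₀ / (a + b) * r₂) / r₂ = t₀ := by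
        field_simp
      simp only [this]
      positivity
    · exact mul_lt_mul_of_pos_right h1 hr₁
    · exact mul_lt_mul_of_pos_right h1 hr₂
  nlinarith
end

section
/- For smooth functions u : ℝ² → ℝ which are 2π-periodic in each variable, set G(u) = ∫_{[0,2π]×[0,2π]} ( ( ∂_s∂_s u + ∂_t∂_t u )² − 2 (∂_s u)² − 2 (∂_t u)² ). Then G is indefinite: there exist smooth doubly 2π-periodic functions u, v with G(u) > 0 and G(v) < 0. -/
open MeasureTheory Real

lemma fd_sin (n : ℝ) (c : ℝ) (x : ℝ × ℝ) :
    HasFDerivAt (fun y : ℝ × ℝ => c * sin (n * y.1))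
      ((c * (cos (n * x.1) * n)) • ContinuousLinearMap.fst ℝ ℝ ℝ) x := by
  have h : HasDerivAt (fun r : ℝ => c * sin (n * r)) (c * (cos (n * x.1) * n)) x.1 := by
    have := (((hasDerivAt_id x.1).const_mul n).sin).const_mul c
    simpa using this
  exact h.comp_hasFDerivAt x (hasFDerivAt_fst)

lemma fd_cos (n : ℝ) (c : ℝ) (x : ℝ × ℝ) :
    HasFDerivAt (fun y : ℝ × ℝ => c * cos (n * y.1))
      ((c * (-sin (n * x.1) * n)) • ContinuousLinearMap.fst ℝ ℝ ℝ) x := by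
  have h : HasDerivAt (fun r : ℝ => c * cos (n * r)) (c * (-sin (n * x.1) * n)) x.1 := by
    have := (((hasDerivAt_id x.1).const_mul n).cos).const_mul c
    simpa using this
  exact h.comp_hasFDerivAt x (hasFDerivAt_fst)

lemma G_sin (n : ℕ) :
    (∫ x in Set.Icc (0 : ℝ) (2 * π) ×ˢ Set.Icc (0 : ℝ) (2 * π),
      ((pdS (pdS (fun y => 1 * sin (n * y.1))) x + pdT (pdT (fun y => 1 * sin (n * y.1))) x) ^ 2
        - 2 * (pdS (fun y => 1 * sin (n * y.1)) x) ^ 2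
        - 2 * (pdT (fun y => 1 * sin (n * y.1)) x) ^ 2))
      = 2 * π ^ 2 * ((n : ℝ) ^ 4 - 2 * (n : ℝ) ^ 2) := by
  have h1 : pdS (fun y => 1 * sin (n * y.1)) = fun y => (n : ℝ) * cos (n * y.1) := by
    funext x
    simp only [pdS, (fd_sin n 1 x).fderiv]
    simp [mul_comm]
  have h2 : pdT (fun y => 1 * sin (n * y.1)) = fun _ => (0 : ℝ) := by
    funext x
    simp only [pdT, (fd_sin n 1 x).fderiv]
    simp
  have h3 : pdS (fun y => (n : ℝ) * cos (n * y.1)) = fun y => -(n : ℝ) ^ 2 * sin (n * y.1) := by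
    funext x
    simp only [pdS, (fd_cos n n x).fderiv]
    simp
    ring
  have h4 : pdT (fun _ => (0 : ℝ)) = fun _ => (0 : ℝ) := by
    funext x
    simp [pdT]
  rw [h1, h2, h3, h4]
  have e : ∀ x : ℝ × ℝ, ((-(n : ℝ) ^ 2 * sin (n * x.1) + 0) ^ 2 - 2 * ((n : ℝ) * cos (n * x.1)) ^ 2
      - 2 * (0 : ℝ) ^ 2) = (fun r : ℝ => (n : ℝ) ^ 4 * sin (n * r) ^ 2
        - 2 * (n : ℝ) ^ 2 * cos (n * r) ^ 2) x.1 * (fun _ : ℝ => (1 : ℝ)) x.2 := by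
    intro x
    ring
  simp_rw [e]
  rw [Measure.volume_eq_prod, setIntegral_prod_mul (fun r : ℝ => (n : ℝ) ^ 4 * sin (n * r) ^ 2
        - 2 * (n : ℝ) ^ 2 * cos (n * r) ^ 2) (fun _ : ℝ => (1 : ℝ)), integral_Icc_eq_integral_Ioc,
    ← intervalIntegral.integral_of_le (by positivity),
    intervalIntegral.integral_eq_sub_of_hasDerivAt
      (f := fun r => ((n : ℝ) ^ 4 - 2 * (n : ℝ) ^ 2) / 2 * r
        - ((n : ℝ) ^ 3 + 2 * n) / 2 * (sin (n * r) * cos (n * r)))]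
  · have hs : sin ((n : ℝ) * (2 * π)) = 0 := by
      have := sin_nat_mul_pi (n * 2)
      push_cast at this
      rw [← this]
      ring_nf
    have hp : (0 : ℝ) ≤ 2 * π := by positivity
    simp [hs, hp]
    ring
  · intro r _
    have hl : HasDerivAt (fun r : ℝ => (n : ℝ) * r) n r := by
      simpa using (hasDerivAt_id r).const_mul (n : ℝ)
    have := ((hasDerivAt_id r).const_mul (((n : ℝ) ^ 4 - 2 * (n : ℝ) ^ 2) / 2)).sub
      ((hl.sin.mul hl.cos).const_mul (((n : ℝ) ^ 3 + 2 * n) / 2))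
    refine this.congr_deriv ?_
    linear_combination (-((n : ℝ) ^ 4 - 2 * (n : ℝ) ^ 2) / 2) * sin_sq_add_cos_sq (n * r)
  · apply Continuous.intervalIntegrable
    fun_prop

lemma per_sin (n : ℕ) (r : ℝ) : sin (n * (r + 2 * π)) = sin (n * r) := by
  rw [mul_add, sin_add_nat_mul_two_pi]

/-- the functional
`G(u) = ∫_{[0,2π]²} ((∂ₛ∂ₛu + ∂ₜ∂ₜu)² − 2(∂ₛu)² − 2(∂ₜu)²)` is indefinite on smooth doubly
`2π`-periodic functions on `ℝ²` (H-instability of the normal congruence of a tube over a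
closed geodesic of `S³`). -/
theorem tube_congruence_sphere_H_unstable :
    ∃ u v : ℝ × ℝ → ℝ, ContDiff ℝ (⊤ : ℕ∞) u ∧ ContDiff ℝ (⊤ : ℕ∞) v ∧
      (∀ x : ℝ × ℝ, u (x.1 + 2 * π, x.2) = u x) ∧
      (∀ x : ℝ × ℝ, u (x.1, x.2 + 2 * π) = u x) ∧
      (∀ x : ℝ × ℝ, v (x.1 + 2 * π, x.2) = v x) ∧
      (∀ x : ℝ × ℝ, v (x.1, x.2 + 2 * π) = v x) ∧
      0 < (∫ x in Set.Icc (0 : ℝ) (2 * π) ×ˢ Set.Icc (0 : ℝ) (2 * π),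
            ((pdS (pdS u) x + pdT (pdT u) x) ^ 2 - 2 * (pdS u x) ^ 2 - 2 * (pdT u x) ^ 2)) ∧
      (∫ x in Set.Icc (0 : ℝ) (2 * π) ×ˢ Set.Icc (0 : ℝ) (2 * π),
            ((pdS (pdS v) x + pdT (pdT v) x) ^ 2 - 2 * (pdS v x) ^ 2 - 2 * (pdT v x) ^ 2)) < 0 := by
  refine ⟨fun y => 1 * sin ((2 : ℕ) * y.1), fun y => 1 * sin ((1 : ℕ) * y.1), by fun_prop, by fun_prop,
    fun x => ?_, fun x => rfl, fun x => ?_, fun x => rfl, ?_, ?_⟩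
  · simp only [per_sin]
  · simp only [per_sin]
  · rw [G_sin]
    norm_num
    positivity
  · rw [G_sin]
    norm_num
    positivity
end

section
/- For smooth functions u : ℝ² → ℝ which are 2π-periodic in the second variable and compactly supported in the first variable, set D(u) = ∫_{ℝ×[0,2π]} ( ( −∂_s∂_s u + ∂_t∂_t u )² + 2 (∂_s u)² − 2 (∂_t u)² ). Then D is indefinite: there exist such functions u, v with D(u) > 0 and D(v) < 0. -/
open MeasureTheory Real

theorem pdS_prod {f f' g : ℝ → ℝ} (hf : ∀ s, HasDerivAt f (f' s) s)
    (hg : Differentiable ℝ g) :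
    pdS (fun x : ℝ × ℝ => f x.1 * g x.2) = fun x => f' x.1 * g x.2 := by
  funext x
  have h1 : HasFDerivAt (fun x : ℝ × ℝ => f x.1) (f' x.1 • ContinuousLinearMap.fst ℝ ℝ ℝ) x :=
    (hf x.1).comp_hasFDerivAt x hasFDerivAt_fst
  have h2 : HasFDerivAt (fun x : ℝ × ℝ => g x.2)
      (deriv g x.2 • ContinuousLinearMap.snd ℝ ℝ ℝ) x :=
    (hg x.2).hasDerivAt.comp_hasFDerivAt x hasFDerivAt_snd
  unfold pdS
  rw [HasFDerivAt.fderiv (f := fun x : ℝ × ℝ => f x.1 * g x.2) (h1.mul h2)]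
  simp [mul_comm]

theorem pdT_prod {f g g' : ℝ → ℝ} (hf : Differentiable ℝ f)
    (hg : ∀ s, HasDerivAt g (g' s) s) :
    pdT (fun x : ℝ × ℝ => f x.1 * g x.2) = fun x => f x.1 * g' x.2 := by
  funext x
  have h1 : HasFDerivAt (fun x : ℝ × ℝ => f x.1)
      (deriv f x.1 • ContinuousLinearMap.fst ℝ ℝ ℝ) x :=
    (hf x.1).hasDerivAt.comp_hasFDerivAt x hasFDerivAt_fst
  have h2 : HasFDerivAt (fun x : ℝ × ℝ => g x.2) (g' x.2 • ContinuousLinearMap.snd ℝ ℝ ℝ) x :=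
    (hg x.2).comp_hasFDerivAt x hasFDerivAt_snd
  unfold pdT
  rw [HasFDerivAt.fderiv (f := fun x : ℝ × ℝ => f x.1 * g x.2) (h1.mul h2)]
  simp

/-- Fubini for products over the strip. -/
theorem strip_prod (F G : ℝ → ℝ) :
    ∫ x in (Set.univ ×ˢ Set.Icc (0 : ℝ) (2 * π) : Set (ℝ × ℝ)), F x.1 * G x.2
      = (∫ s, F s) * ∫ t in (0 : ℝ)..(2 * π), G t := by
  rw [Measure.volume_eq_prod, setIntegral_prod_mul, setIntegral_univ,
    intervalIntegral.integral_of_le (by positivity), integral_Icc_eq_integral_Ioc]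

theorem strip_integrable {F G : ℝ → ℝ} (hF : Integrable F) (hG : Continuous G) :
    IntegrableOn (fun x : ℝ × ℝ => F x.1 * G x.2)
      (Set.univ ×ˢ Set.Icc (0 : ℝ) (2 * π) : Set (ℝ × ℝ)) := by
  rw [IntegrableOn, Measure.volume_eq_prod, ← Measure.prod_restrict]
  refine Integrable.mul_prod ?_ ?_
  · simpa using hF
  · exact hG.continuousOn.integrableOn_Icc

theorem exists_small (A B C : ℝ) (hC : 0 < C) :
    ∃ e : ℝ, 0 < e ∧ e ^ 4 * A + e ^ 2 * B - C < 0 := by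
  have hc : Continuous fun e : ℝ => e ^ 4 * A + e ^ 2 * B - C := by fun_prop
  have h0 : ∀ᶠ e in nhds (0 : ℝ), e ^ 4 * A + e ^ 2 * B - C < 0 :=
    hc.continuousAt.eventually_lt continuousAt_const (by simpa using hC)
  have h1 : ∀ᶠ e in nhdsWithin (0 : ℝ) (Set.Ioi 0), e ^ 4 * A + e ^ 2 * B - C < 0 :=
    h0.filter_mono nhdsWithin_le_nhds
  obtain ⟨e, h, he⟩ := (h1.and self_mem_nhdsWithin).exists
  exact ⟨e, he, h⟩

/-- A smooth compactly supported profile with first two derivatives. -/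
theorem exists_profile : ∃ p p1 p2 : ℝ → ℝ, ContDiff ℝ (⊤ : ℕ∞) p ∧ Continuous p1 ∧
    Continuous p2 ∧ (∀ s, HasDerivAt p (p1 s) s) ∧ (∀ s, HasDerivAt p1 (p2 s) s) ∧
    HasCompactSupport p ∧ HasCompactSupport p1 ∧ HasCompactSupport p2 ∧
    (∃ s, p s ≠ 0) ∧ (∃ s, p1 s ≠ 0) := by
  let b : ContDiffBump (0 : ℝ) := ⟨1, 2, by norm_num, by norm_num⟩
  have hb : ContDiff ℝ (⊤ : ℕ∞) (b : ℝ → ℝ) := b.contDiff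
  have hb1 : ContDiff ℝ (⊤ : ℕ∞) (deriv (b : ℝ → ℝ)) := (contDiff_infty_iff_deriv.1 hb).2
  have hb2 : ContDiff ℝ (⊤ : ℕ∞) (deriv (deriv (b : ℝ → ℝ))) := (contDiff_infty_iff_deriv.1 hb1).2
  have hd := (contDiff_infty_iff_deriv.1 hb).1
  have hs : HasCompactSupport (b : ℝ → ℝ) := b.hasCompactSupport
  have h0 : b 0 = 1 := b.one_of_mem_closedBall (by simp [b])
  refine ⟨b, deriv b, deriv (deriv b), hb, hb1.continuous, hb2.continuous,
    fun s => (hd s).hasDerivAt,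
    fun s => ((contDiff_infty_iff_deriv.1 hb1).1 s).hasDerivAt, hs, hs.deriv, hs.deriv.deriv,
    ⟨0, by rw [h0]; norm_num⟩, ?_⟩
  by_contra! h
  have h3 : b 0 = b 3 := is_const_of_deriv_eq_zero hd h 0 3
  rw [h0, b.zero_of_le_dist (by simp [b]; norm_num)] at h3
  norm_num at h3

/-- the functional
`D(u) = ∫_{ℝ×[0,2π]} ((−∂ₛ∂ₛu + ∂ₜ∂ₜu)² + 2(∂ₛu)² − 2(∂ₜu)²)` is indefinite on smooth
functions that are `2π`-periodic in the second variable and compactly supported in the first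
(H-instability w.r.t. `G` of the tube congruence over an unbounded geodesic of `dS³`). -/
theorem tube_congruence_deSitter_G_unstable :
    ∃ u v : ℝ × ℝ → ℝ, ContDiff ℝ (⊤ : ℕ∞) u ∧ ContDiff ℝ (⊤ : ℕ∞) v ∧
      (∀ x : ℝ × ℝ, u (x.1, x.2 + 2 * π) = u x) ∧
      (∀ x : ℝ × ℝ, v (x.1, x.2 + 2 * π) = v x) ∧
      (∃ K : Set ℝ, IsCompact K ∧ ∀ x : ℝ × ℝ, x.1 ∉ K → u x = 0) ∧
      (∃ K : Set ℝ, IsCompact K ∧ ∀ x : ℝ × ℝ, x.1 ∉ K → v x = 0) ∧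
      0 < (∫ x in (Set.univ ×ˢ Set.Icc (0 : ℝ) (2 * π) : Set (ℝ × ℝ)),
            ((-(pdS (pdS u) x) + pdT (pdT u) x) ^ 2 + 2 * (pdS u x) ^ 2 - 2 * (pdT u x) ^ 2)) ∧
      (∫ x in (Set.univ ×ˢ Set.Icc (0 : ℝ) (2 * π) : Set (ℝ × ℝ)),
            ((-(pdS (pdS v) x) + pdT (pdT v) x) ^ 2 + 2 * (pdS v x) ^ 2 - 2 * (pdT v x) ^ 2)) < 0 := by
  obtain ⟨p, p1, p2, hp, c1, c2, d0, d1, k0, k1, k2, ⟨a, ha⟩, ⟨a1, ha1⟩⟩ := exists_profile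
  have c0 := hp.continuous
  have sqi : ∀ {q r : ℝ → ℝ}, Continuous q → Continuous r → HasCompactSupport q →
      Integrable fun s => q s * r s := fun hq hr hk =>
    (hq.mul hr).integrable_of_hasCompactSupport hk.mul_right
  have sqpos : ∀ {q : ℝ → ℝ}, Continuous q → HasCompactSupport q → (∃ s, q s ≠ 0) →
      0 < ∫ s, q s * q s := by
    rintro q hq hk ⟨s, hs⟩
    exact (hq.mul hq).integral_pos_of_hasCompactSupport_nonneg_nonzero hk.mul_right
      (fun s => mul_self_nonneg _) (x := s) (mul_self_ne_zero.2 hs)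
  obtain ⟨e, he, hneg⟩ := exists_small (∫ s, p2 s * p2 s)
    ((∫ s, p s * p2 s) * 2 + (∫ s, p1 s * p1 s) * 2) (∫ s, p s * p s) (sqpos c0 k0 ⟨a, ha⟩)
  have dl : ∀ s : ℝ, HasDerivAt (fun s => e * s) e s := fun s => by
    simpa using (hasDerivAt_id s).const_mul e
  have e0 : ∀ s, HasDerivAt (fun s => p (e * s)) (e * p1 (e * s)) s := fun s => by
    have := (d0 (e * s)).comp s (dl s)
    refine this.congr_deriv ?_
    ring
  have e1 : ∀ s, HasDerivAt (fun s => e * p1 (e * s)) (e ^ 2 * p2 (e * s)) s := fun s => by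
    have := ((d1 (e * s)).comp s (dl s)).const_mul e
    refine this.congr_deriv ?_
    ring
  refine ⟨fun x => p x.1 * (1 : ℝ), fun x => (fun s => p (e * s)) x.1 * cos x.2,
    ?_, ?_, ?_, ?_, ?_, ?_, ?_, ?_⟩
  · exact (hp.comp contDiff_fst).mul contDiff_const
  · exact (hp.comp (contDiff_const.mul contDiff_fst)).mul (contDiff_cos.comp contDiff_snd)
  · intro x; simp
  · intro x; simp
  · refine ⟨tsupport p, k0, fun x hx => ?_⟩
    simp [image_eq_zero_of_notMem_tsupport hx]
  · refine ⟨Set.image (fun s => e⁻¹ * s) (tsupport p), k0.isCompact.image (by fun_prop), fun x hx => ?_⟩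
    have : e * x.1 ∉ tsupport p := fun h => hx ⟨_, h, by field_simp⟩
    simp [image_eq_zero_of_notMem_tsupport this]
  · have q1 : pdS (fun x => p x.1 * (1 : ℝ)) = fun x => p1 x.1 * (1 : ℝ) :=
      pdS_prod (g := fun _ => 1) d0 (by fun_prop)
    have q2 : pdS (fun x => p1 x.1 * (1 : ℝ)) = fun x => p2 x.1 * (1 : ℝ) :=
      pdS_prod (g := fun _ => 1) d1 (by fun_prop)
    have q3 : pdT (fun x => p x.1 * (1 : ℝ)) = fun x => p x.1 * (0 : ℝ) :=
      pdT_prod (g := fun _ => 1) (g' := fun _ => 0) (fun s => (d0 s).differentiableAt)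
        (fun s => hasDerivAt_const s (1 : ℝ))
    have q4 : pdT (fun x => p x.1 * (0 : ℝ)) = fun x => p x.1 * (0 : ℝ) :=
      pdT_prod (g := fun _ => 0) (g' := fun _ => 0) (fun s => (d0 s).differentiableAt)
        (fun s => hasDerivAt_const s (0 : ℝ))
    rw [q1, q2, q3, q4]
    have key := strip_prod (fun s => p2 s * p2 s + 2 * (p1 s * p1 s)) (fun _ => 1)
    rw [integral_add (sqi c2 c2 k2) ((sqi c1 c1 k1).const_mul 2), integral_const_mul] at key
    have hpos := sqpos c1 k1 ⟨a1, ha1⟩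
    have hnn : 0 ≤ ∫ s, p2 s * p2 s := integral_nonneg fun s => mul_self_nonneg _
    calc (0 : ℝ) < _ := by
          have : 0 < ∫ t in (0 : ℝ)..(2 * π), (1 : ℝ) := by simp; positivity
          exact mul_pos (by linarith) this
      _ = _ := key.symm
      _ = _ := by congr 1; funext x; ring
  · have hdc : ∀ t, HasDerivAt (fun t => -sin t) (-cos t) t := fun t => (hasDerivAt_sin t).neg
    rw [pdS_prod e0 differentiable_cos, pdS_prod e1 differentiable_cos,
      pdT_prod (g' := fun t => -sin t) (fun s => (e0 s).differentiableAt) hasDerivAt_cos,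
      pdT_prod (g' := fun t => -cos t) (fun s => (e0 s).differentiableAt) hdc]
    -- the profile integrals, before scaling
    let P : ℝ → ℝ := fun s => e ^ 4 * (p2 s * p2 s) + (2 * e ^ 2) * (p s * p2 s) + p s * p s
      + (2 * e ^ 2) * (p1 s * p1 s)
    let Q : ℝ → ℝ := fun s => 2 * (p s * p s)
    have i22 := (sqi c2 c2 k2).const_mul (e ^ 4)
    have i02 := (sqi c0 c2 k0).const_mul (2 * e ^ 2)
    have i00 := sqi c0 c0 k0
    have i11 := (sqi c1 c1 k1).const_mul (2 * e ^ 2)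
    have iP : Integrable P := ((i22.add i02).add i00).add i11
    have iQ : Integrable Q := i00.const_mul 2
    have vP : ∫ s, P s = e ^ 4 * (∫ s, p2 s * p2 s) + (2 * e ^ 2) * (∫ s, p s * p2 s)
        + (∫ s, p s * p s) + (2 * e ^ 2) * (∫ s, p1 s * p1 s) := by
      have h1 := integral_add ((i22.add i02).add i00) i11
      have h2 := integral_add (i22.add i02) i00
      have h3 := integral_add i22 i02
      simp only [Pi.add_apply, integral_const_mul] at h1 h2 h3
      rw [h2, h3] at h1
      exact h1
    have vQ : ∫ s, Q s = 2 * ∫ s, p s * p s := integral_const_mul _ _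
    have hlt : (∫ s, P s) - ∫ s, Q s < 0 := by rw [vP, vQ]; linarith
    have iP' : Integrable fun s => P (e * s) := iP.comp_mul_left' he.ne'
    have iQ' : Integrable fun s => Q (e * s) := iQ.comp_mul_left' he.ne'
    have sP : ∫ s, P (e * s) = e⁻¹ * ∫ s, P s := by
      rw [Measure.integral_comp_mul_left P e, abs_of_pos (inv_pos.2 he), smul_eq_mul]
    have sQ : ∫ s, Q (e * s) = e⁻¹ * ∫ s, Q s := by
      rw [Measure.integral_comp_mul_left Q e, abs_of_pos (inv_pos.2 he), smul_eq_mul]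
    have hcos : ∫ t in (0 : ℝ)..(2 * π), cos t ^ 2 = π := by rw [integral_cos_sq]; simp
    have hsin : ∫ t in (0 : ℝ)..(2 * π), sin t ^ 2 = π := by rw [integral_sin_sq]; simp
    have kP := strip_prod (fun s => P (e * s)) (fun t => cos t ^ 2)
    have kQ := strip_prod (fun s => Q (e * s)) (fun t => sin t ^ 2)
    have key := integral_sub (strip_integrable (G := fun t => cos t ^ 2) iP' (by fun_prop))
      (strip_integrable (G := fun t => sin t ^ 2) iQ' (by fun_prop))
    rw [kP, kQ, hcos, hsin, sP, sQ] at key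
    calc _ = _ := by congr 1; funext x; simp only [P, Q]; ring
      _ = _ := key
      _ = e⁻¹ * π * ((∫ s, P s) - ∫ s, Q s) := by ring
      _ < 0 := mul_neg_of_pos_of_neg (by positivity) hlt
end

section
/- For smooth functions u : ℝ² → ℝ which are 2π-periodic in the second variable and compactly supported in the first variable, set D′(u) = ∫_{ℝ×[0,2π]} ( 4 (∂_s∂_t u)² − 2 (∂_s u)² + 2 (∂_t u)² ). Then D′ is indefinite: there exist such functions u, v with D′(u) > 0 and D′(v) < 0. -/
open MeasureTheory Real

lemma sep_fderiv {f g : ℝ → ℝ} (hf : Differentiable ℝ f) (hg : Differentiable ℝ g) (x : ℝ × ℝ) :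
    HasFDerivAt (fun y : ℝ × ℝ => f y.1 * g y.2)
      (f x.1 • (deriv g x.2 • ContinuousLinearMap.snd ℝ ℝ ℝ) +
        g x.2 • (deriv f x.1 • ContinuousLinearMap.fst ℝ ℝ ℝ)) x := by
  have h1 := (hf x.1).hasDerivAt.comp_hasFDerivAt x (hasFDerivAt_fst (𝕜 := ℝ) (p := x))
  have h2 := (hg x.2).hasDerivAt.comp_hasFDerivAt x (hasFDerivAt_snd (𝕜 := ℝ) (p := x))
  exact h1.mul h2

lemma sep_pdS {f g : ℝ → ℝ} (hf : Differentiable ℝ f) (hg : Differentiable ℝ g) :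
    pdS (fun y : ℝ × ℝ => f y.1 * g y.2) = fun y => deriv f y.1 * g y.2 := by
  ext x
  rw [pdS, (sep_fderiv hf hg x).fderiv]
  simp [mul_comm]

lemma sep_pdT {f g : ℝ → ℝ} (hf : Differentiable ℝ f) (hg : Differentiable ℝ g) :
    pdT (fun y : ℝ × ℝ => f y.1 * g y.2) = fun y => f y.1 * deriv g y.2 := by
  ext x
  rw [pdT, (sep_fderiv hf hg x).fderiv]
  simp

lemma sep_integral {f g : ℝ → ℝ} (hf : ContDiff ℝ (⊤ : ℕ∞) f) (hg : ContDiff ℝ (⊤ : ℕ∞) g)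
    (hc : HasCompactSupport f) :
    (∫ x in (Set.univ ×ˢ Set.Icc (0 : ℝ) (2 * π) : Set (ℝ × ℝ)),
            (4 * (pdS (pdT (fun y : ℝ × ℝ => f y.1 * g y.2)) x) ^ 2
              - 2 * (pdS (fun y : ℝ × ℝ => f y.1 * g y.2) x) ^ 2
              + 2 * (pdT (fun y : ℝ × ℝ => f y.1 * g y.2) x) ^ 2)) =
    4 * ((∫ s, deriv f s ^ 2) * ∫ t in Set.Icc (0 : ℝ) (2 * π), deriv g t ^ 2)
    - 2 * ((∫ s, deriv f s ^ 2) * ∫ t in Set.Icc (0 : ℝ) (2 * π), g t ^ 2)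
    + 2 * ((∫ s, f s ^ 2) * ∫ t in Set.Icc (0 : ℝ) (2 * π), deriv g t ^ 2) := by
  have hfd : Differentiable ℝ f := hf.differentiable (by simp)
  have hgd : Differentiable ℝ g := hg.differentiable (by simp)
  have hf' : Continuous (deriv f) := hf.continuous_deriv (by simp)
  have hg' : ContDiff ℝ (⊤ : ℕ∞) (deriv g) := (contDiff_infty_iff_deriv.1 hg).2
  rw [sep_pdT hfd hgd, sep_pdS hfd hgd, sep_pdS hfd (hg'.differentiable (by simp))]
  have i1 : Integrable (fun s => f s ^ 2) := by
    refine (hf.continuous.pow 2).integrable_of_hasCompactSupport ?_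
    simp only [pow_two]
    exact hc.mul_left
  have i2 : Integrable (fun s => deriv f s ^ 2) := by
    refine (hf'.pow 2).integrable_of_hasCompactSupport ?_
    simp only [pow_two]
    exact hc.deriv.mul_left
  have j1 : Integrable (fun s => g s ^ 2) (volume.restrict (Set.Icc (0 : ℝ) (2 * π))) :=
    (hg.continuous.pow 2).continuousOn.integrableOn_compact isCompact_Icc
  have j2 : Integrable (fun s => deriv g s ^ 2) (volume.restrict (Set.Icc (0 : ℝ) (2 * π))) :=
    (hg'.continuous.pow 2).continuousOn.integrableOn_compact isCompact_Icc
  rw [Measure.volume_eq_prod, ← Measure.prod_restrict, Measure.restrict_univ]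
  simp only [mul_pow]
  rw [integral_add, integral_sub, integral_const_mul, integral_const_mul, integral_const_mul]
  · rw [integral_prod_mul (fun s => deriv f s ^ 2) (fun s => deriv g s ^ 2),
      integral_prod_mul (fun s => deriv f s ^ 2) (fun s => g s ^ 2),
      integral_prod_mul (fun s => f s ^ 2) (fun s => deriv g s ^ 2)]
  · exact (i2.mul_prod j2).const_mul 4
  · exact (i2.mul_prod j1).const_mul 2
  · exact ((i2.mul_prod j2).const_mul 4).sub ((i2.mul_prod j1).const_mul 2)
  · exact (i1.mul_prod j2).const_mul 2

lemma bump_exists : ∃ f : ℝ → ℝ, ContDiff ℝ (⊤ : ℕ∞) f ∧ HasCompactSupport f ∧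
    0 < ∫ s, deriv f s ^ 2 := by
  let φ : ContDiffBump (0 : ℝ) := ⟨1, 2, by norm_num, by norm_num⟩
  have hs : ContDiff ℝ (⊤ : ℕ∞) φ := φ.contDiff
  refine ⟨φ, hs, φ.hasCompactSupport, ?_⟩
  have hne : ∃ s, deriv φ s ≠ 0 := by
    by_contra! h
    have h0 := is_const_of_deriv_eq_zero (hs.differentiable (by simp)) h 0 3
    have h1 : φ 0 = 1 := φ.one_of_mem_closedBall (by simp [φ])
    have h2 : φ 3 = 0 := φ.zero_of_le_dist (by simp [φ]; norm_num)
    rw [h1, h2] at h0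
    norm_num at h0
  obtain ⟨s, hsn⟩ := hne
  refine Continuous.integral_pos_of_hasCompactSupport_nonneg_nonzero (x := s)
    ((hs.continuous_deriv (by simp)).pow 2) ?_ (fun x => by positivity) (by positivity)
  exact φ.hasCompactSupport.deriv.comp_left (g := fun x : ℝ => x ^ 2) (by simp)

/-- the functional
`D′(u) = ∫_{ℝ×[0,2π]} (4(∂ₛ∂ₜu)² − 2(∂ₛu)² + 2(∂ₜu)²)` is indefinite on smooth functions
that are `2π`-periodic in the second variable and compactly supported in the first
(H-instability w.r.t. `G′` of the tube congruence over an unbounded geodesic of `dS³`). -/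
theorem tube_congruence_deSitter_G'_unstable :
    ∃ u v : ℝ × ℝ → ℝ, ContDiff ℝ (⊤ : ℕ∞) u ∧ ContDiff ℝ (⊤ : ℕ∞) v ∧
      (∀ x : ℝ × ℝ, u (x.1, x.2 + 2 * π) = u x) ∧
      (∀ x : ℝ × ℝ, v (x.1, x.2 + 2 * π) = v x) ∧
      (∃ K : Set ℝ, IsCompact K ∧ ∀ x : ℝ × ℝ, x.1 ∉ K → u x = 0) ∧
      (∃ K : Set ℝ, IsCompact K ∧ ∀ x : ℝ × ℝ, x.1 ∉ K → v x = 0) ∧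
      0 < (∫ x in (Set.univ ×ˢ Set.Icc (0 : ℝ) (2 * π) : Set (ℝ × ℝ)),
            (4 * (pdS (pdT u) x) ^ 2 - 2 * (pdS u x) ^ 2 + 2 * (pdT u x) ^ 2)) ∧
      (∫ x in (Set.univ ×ˢ Set.Icc (0 : ℝ) (2 * π) : Set (ℝ × ℝ)),
            (4 * (pdS (pdT v) x) ^ 2 - 2 * (pdS v x) ^ 2 + 2 * (pdT v x) ^ 2)) < 0 := by
  obtain ⟨f, hf, hc, hpos⟩ := bump_exists
  have hsupp : ∀ g : ℝ → ℝ, ∃ K : Set ℝ, IsCompact K ∧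
      ∀ x : ℝ × ℝ, x.1 ∉ K → (fun y : ℝ × ℝ => f y.1 * g y.2) x = 0 := fun g =>
    ⟨tsupport f, hc, fun x hx => by simp [image_eq_zero_of_notMem_tsupport hx]⟩
  have hsm : ∀ g : ℝ → ℝ, ContDiff ℝ (⊤ : ℕ∞) g →
      ContDiff ℝ (⊤ : ℕ∞) (fun y : ℝ × ℝ => f y.1 * g y.2) := fun g hg =>
    (hf.comp contDiff_fst).mul (hg.comp contDiff_snd)
  have hpi := Real.pi_pos
  refine ⟨fun y => f y.1 * Real.cos y.2, fun y => f y.1 * (fun _ : ℝ => (1 : ℝ)) y.2,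
    hsm _ Real.contDiff_cos, hsm _ contDiff_const, fun x => by simp, fun x => by simp,
    hsupp Real.cos, hsupp (fun _ => 1), ?_, ?_⟩
  · rw [sep_integral hf Real.contDiff_cos hc]
    have hA : 0 ≤ ∫ s, f s ^ 2 := integral_nonneg fun s => by positivity
    have h1 : ∫ t in Set.Icc (0 : ℝ) (2 * π), deriv Real.cos t ^ 2 = π := by
      rw [integral_Icc_eq_integral_Ioc, ← intervalIntegral.integral_of_le (by positivity)]
      simp [integral_sin_sq]
    have h2 : ∫ t in Set.Icc (0 : ℝ) (2 * π), Real.cos t ^ 2 = π := by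
      rw [integral_Icc_eq_integral_Ioc, ← intervalIntegral.integral_of_le (by positivity)]
      simp [integral_cos_sq]
    rw [h1, h2]
    have := mul_pos hpos hpi
    have := mul_nonneg hA hpi.le
    linarith
  · rw [sep_integral hf contDiff_const hc]
    have := mul_pos hpos hpi
    simp
    positivity
end

section
/- The functional u ↦ ∫_{ℝ²} ( 4 (∂_s∂_t u)² − 2 (∂_s u)² − 2 (∂_t u)² ) is indefinite on C_c^∞(ℝ²): there exist u, v ∈ C_c^∞(ℝ²) with ∫_{ℝ²} ( 4 (∂_s∂_t u)² − 2 (∂_s u)² − 2 (∂_t u)² ) > 0 and ∫_{ℝ²} ( 4 (∂_s∂_t v)² − 2 (∂_s v)² − 2 (∂_t v)² ) < 0. -/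
open MeasureTheory Real

lemma tube_pdS_prod (g h : ℝ → ℝ) (hg : Differentiable ℝ g) (hh : Differentiable ℝ h) :
    pdS (fun x => g x.1 * h x.2) = fun x => deriv g x.1 * h x.2 := by
  funext x
  have h1 : HasFDerivAt (fun x : ℝ × ℝ => g x.1) (deriv g x.1 • ContinuousLinearMap.fst ℝ ℝ ℝ) x :=
    (hg x.1).hasDerivAt.comp_hasFDerivAt x hasFDerivAt_fst
  have h2 : HasFDerivAt (fun x : ℝ × ℝ => h x.2) (deriv h x.2 • ContinuousLinearMap.snd ℝ ℝ ℝ) x :=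
    (hh x.2).hasDerivAt.comp_hasFDerivAt x hasFDerivAt_snd
  have h3 : HasFDerivAt (fun x : ℝ × ℝ => g x.1 * h x.2) _ x := h1.mul h2
  rw [pdS, h3.fderiv]
  simp
  ring

lemma tube_pdT_prod (g h : ℝ → ℝ) (hg : Differentiable ℝ g) (hh : Differentiable ℝ h) :
    pdT (fun x => g x.1 * h x.2) = fun x => g x.1 * deriv h x.2 := by
  funext x
  have h1 : HasFDerivAt (fun x : ℝ × ℝ => g x.1) (deriv g x.1 • ContinuousLinearMap.fst ℝ ℝ ℝ) x :=
    (hg x.1).hasDerivAt.comp_hasFDerivAt x hasFDerivAt_fst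
  have h2 : HasFDerivAt (fun x : ℝ × ℝ => h x.2) (deriv h x.2 • ContinuousLinearMap.snd ℝ ℝ ℝ) x :=
    (hh x.2).hasDerivAt.comp_hasFDerivAt x hasFDerivAt_snd
  have h3 : HasFDerivAt (fun x : ℝ × ℝ => g x.1 * h x.2) _ x := h1.mul h2
  rw [pdT, h3.fderiv]
  simp

lemma tube_int_sq (g : ℝ → ℝ) (hg : Continuous g) (hc : HasCompactSupport g) :
    Integrable (fun s => g s ^ 2) := by
  have h : HasCompactSupport (fun s => g s ^ 2) :=
    hc.comp_left (g := fun y : ℝ => y ^ 2) (by simp)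
  exact (hg.pow 2).integrable_of_hasCompactSupport h

lemma tube_functional (g : ℝ → ℝ) (hg : ContDiff ℝ (⊤ : ℕ∞) g) (hc : HasCompactSupport g) :
    (∫ x, (4 * (pdS (pdT (fun x => g x.1 * g x.2)) x) ^ 2 - 2 * (pdS (fun x => g x.1 * g x.2) x) ^ 2
      - 2 * (pdT (fun x => g x.1 * g x.2) x) ^ 2))
      = 4 * (∫ s, deriv g s ^ 2) * ((∫ s, deriv g s ^ 2) - ∫ s, g s ^ 2) := by
  have hd : Differentiable ℝ g := hg.differentiable (by simp)
  have hg' : ContDiff ℝ (⊤ : ℕ∞) (deriv g) := (contDiff_infty_iff_deriv.1 hg).2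
  have hd' : Differentiable ℝ (deriv g) := hg'.differentiable (by simp)
  rw [tube_pdT_prod g g hd hd, tube_pdS_prod g g hd hd, tube_pdS_prod g _ hd hd']
  have iB := tube_int_sq g hg.continuous hc
  have iA := tube_int_sq _ hg'.continuous hc.deriv
  have e : (fun x : ℝ × ℝ => 4 * (deriv g x.1 * deriv g x.2) ^ 2 - 2 * (deriv g x.1 * g x.2) ^ 2
      - 2 * (g x.1 * deriv g x.2) ^ 2) = fun x : ℝ × ℝ => 4 * (deriv g x.1 ^ 2 * deriv g x.2 ^ 2)
      - 2 * (deriv g x.1 ^ 2 * g x.2 ^ 2) - 2 * (g x.1 ^ 2 * deriv g x.2 ^ 2) := by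
    funext x; ring
  have i1 := (iA.mul_prod iA).const_mul 4
  have i2 := (iA.mul_prod iB).const_mul 2
  have i3 := (iB.mul_prod iA).const_mul 2
  have i12 : Integrable (fun x : ℝ × ℝ => 4 * (deriv g x.1 ^ 2 * deriv g x.2 ^ 2)
      - 2 * (deriv g x.1 ^ 2 * g x.2 ^ 2)) (volume.prod volume) := i1.sub i2
  rw [e, Measure.volume_eq_prod, integral_sub i12 i3, integral_sub i1 i2,
    integral_const_mul, integral_const_mul, integral_const_mul,
    integral_prod_mul (fun s => deriv g s ^ 2) (fun s => deriv g s ^ 2),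
    integral_prod_mul (fun s => deriv g s ^ 2) (fun s => g s ^ 2),
    integral_prod_mul (fun s => g s ^ 2) (fun s => deriv g s ^ 2)]
  ring

lemma tube_sq_pos (g : ℝ → ℝ) (hg : Continuous g) (hc : HasCompactSupport g) (x : ℝ)
    (hx : g x ≠ 0) : 0 < ∫ s, g s ^ 2 := by
  have h : HasCompactSupport (fun s => g s ^ 2) :=
    hc.comp_left (g := fun y : ℝ => y ^ 2) (by simp)
  exact (hg.pow 2).integral_pos_of_hasCompactSupport_nonneg_nonzero h
    (fun s => sq_nonneg (g s)) (x := x) (pow_ne_zero 2 hx)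

lemma tube_prod_mem (g : ℝ → ℝ) (hg : ContDiff ℝ (⊤ : ℕ∞) g) (hc : HasCompactSupport g) :
    ContDiff ℝ (⊤ : ℕ∞) (fun x : ℝ × ℝ => g x.1 * g x.2) ∧
      HasCompactSupport (fun x : ℝ × ℝ => g x.1 * g x.2) := by
  refine ⟨(hg.comp contDiff_fst).mul (hg.comp contDiff_snd), ?_⟩
  refine HasCompactSupport.intro (hc.isCompact.prod hc.isCompact) fun x hx => ?_
  by_contra h
  exact hx ⟨subset_tsupport _ (left_ne_zero_of_mul h), subset_tsupport _ (right_ne_zero_of_mul h)⟩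

lemma tube_exists (c : ℝ) (hcpos : 0 < c) : ∃ g : ℝ → ℝ, ContDiff ℝ (⊤ : ℕ∞) g ∧
    HasCompactSupport g ∧ 0 < (∫ s, g s ^ 2) ∧ (∫ s, deriv g s ^ 2) = c * ∫ s, g s ^ 2 := by
  let f : ContDiffBump (0 : ℝ) := ⟨1, 2, by norm_num, by norm_num⟩
  have hf : ContDiff ℝ (⊤ : ℕ∞) f := f.contDiff
  have hfc : HasCompactSupport f := f.hasCompactSupport
  have f0 : f 0 = 1 := f.one_of_mem_closedBall (by simp [f])
  have f3 : f 3 = 0 := f.zero_of_le_dist (by simp [f]; norm_num)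
  have hB : 0 < ∫ s, f s ^ 2 := tube_sq_pos f hf.continuous hfc 0 (by simp [f0])
  have hf' : ContDiff ℝ (⊤ : ℕ∞) (deriv f) := (contDiff_infty_iff_deriv.1 hf).2
  have hA : 0 < ∫ s, deriv f s ^ 2 := by
    obtain ⟨x, hx⟩ : ∃ x, deriv f x ≠ 0 := by
      by_contra! h
      have := is_const_of_deriv_eq_zero (hf.differentiable (by simp)) h 0 3
      rw [f0, f3] at this
      norm_num at this
    exact tube_sq_pos _ hf'.continuous hfc.deriv x hx
  set A := ∫ s, deriv f s ^ 2 with hAdef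
  set B := ∫ s, f s ^ 2 with hBdef
  have hl : 0 < √(c * B / A) := by positivity
  have hl2 : √(c * B / A) ^ 2 = c * B / A := Real.sq_sqrt (by positivity)
  set l := √(c * B / A)
  have eB : (∫ s, f (l * s) ^ 2) = l⁻¹ * B := by
    rw [Measure.integral_comp_mul_left (fun s => f s ^ 2) l, abs_of_pos (by positivity)]
    rfl
  have eA : (∫ s, deriv (fun s => f (l * s)) s ^ 2) = l ^ 2 * (l⁻¹ * A) := by
    have : ∀ s, deriv (fun s => f (l * s)) s ^ 2 = l ^ 2 * (deriv f (l * s)) ^ 2 := by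
      intro s
      rw [deriv_comp_mul_left l f s, smul_eq_mul]
      ring
    simp_rw [this]
    rw [integral_const_mul, Measure.integral_comp_mul_left (fun s => deriv f s ^ 2) l,
      abs_of_pos (by positivity)]
    rfl
  refine ⟨fun s => f (l * s), hf.comp (contDiff_const.mul contDiff_id), ?_, ?_, ?_⟩
  · exact hfc.comp_homeomorph (Homeomorph.mulLeft₀ l hl.ne')
  · rw [eB]; positivity
  · rw [eA, eB, hl2]; field_simp

/-- the functional `u ↦ ∫_{ℝ²} (4(∂ₛ∂ₜu)² − 2(∂ₛu)² − 2(∂ₜu)²)` is indefinite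
on `C_c^∞(ℝ²)` (H-instability w.r.t. `G′` of the tube congruence over an unbounded geodesic
of `AdS³`). -/
theorem tube_congruence_antiDeSitter_G'_unstable :
    ∃ u v : ℝ × ℝ → ℝ,
      (ContDiff ℝ (⊤ : ℕ∞) u ∧ HasCompactSupport u) ∧ (ContDiff ℝ (⊤ : ℕ∞) v ∧ HasCompactSupport v) ∧
      0 < (∫ x, (4 * (pdS (pdT u) x) ^ 2 - 2 * (pdS u x) ^ 2 - 2 * (pdT u x) ^ 2)) ∧
      (∫ x, (4 * (pdS (pdT v) x) ^ 2 - 2 * (pdS v x) ^ 2 - 2 * (pdT v x) ^ 2)) < 0 := by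
  obtain ⟨g, hg, gc, gB, gA⟩ := tube_exists 2 (by norm_num)
  obtain ⟨h, hh, hc, hB, hA⟩ := tube_exists (1 / 2) (by norm_num)
  refine ⟨fun x => g x.1 * g x.2, fun x => h x.1 * h x.2, tube_prod_mem g hg gc,
    tube_prod_mem h hh hc, ?_, ?_⟩
  · rw [tube_functional g hg gc, gA]
    nlinarith [mul_pos gB gB]
  · rw [tube_functional h hh hc, hA]
    nlinarith [mul_pos hB hB]
end

section
/- Let c : ℝ → ℝ be a continuous function and m > 0 a constant with c(s) ≥ m for all s ∈ ℝ. Then the functional u ↦ ∫_{ℝ²} ( 4 (∂_s∂_t u)² − c(s) (∂_t u)² ) ds dt is indefinite on C_c^∞(ℝ²): there exist u, v ∈ C_c^∞(ℝ²) with ∫_{ℝ²} ( 4 (∂_s∂_t u)² − c(s) (∂_t u)² ) > 0 and ∫_{ℝ²} ( 4 (∂_s∂_t v)² − c(s) (∂_t v)² ) < 0. -/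
open MeasureTheory Real

lemma nb_pdT (f g : ℝ → ℝ) (hf : ContDiff ℝ (⊤ : ℕ∞) f) (hg : ContDiff ℝ (⊤ : ℕ∞) g) :
    pdT (fun x : ℝ × ℝ => f x.1 * g x.2) = fun x => f x.1 * deriv g x.2 := by
  funext x
  have h1 : HasFDerivAt (fun x : ℝ × ℝ => f x.1) _ x :=
    ((hf.differentiable (by simp) x.1).hasDerivAt.hasFDerivAt).comp x hasFDerivAt_fst
  have h2 : HasFDerivAt (fun x : ℝ × ℝ => g x.2) _ x :=
    ((hg.differentiable (by simp) x.2).hasDerivAt.hasFDerivAt).comp x hasFDerivAt_snd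
  have h3 : HasFDerivAt (fun x : ℝ × ℝ => f x.1 * g x.2) _ x := h1.mul h2
  rw [pdT, h3.fderiv]
  simp

lemma nb_pdS (f g : ℝ → ℝ) (hf : ContDiff ℝ (⊤ : ℕ∞) f) (hg : ContDiff ℝ (⊤ : ℕ∞) g) :
    pdS (fun x : ℝ × ℝ => f x.1 * g x.2) = fun x => deriv f x.1 * g x.2 := by
  funext x
  have h1 : HasFDerivAt (fun x : ℝ × ℝ => f x.1) _ x :=
    ((hf.differentiable (by simp) x.1).hasDerivAt.hasFDerivAt).comp x hasFDerivAt_fst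
  have h2 : HasFDerivAt (fun x : ℝ × ℝ => g x.2) _ x :=
    ((hg.differentiable (by simp) x.2).hasDerivAt.hasFDerivAt).comp x hasFDerivAt_snd
  have h3 : HasFDerivAt (fun x : ℝ × ℝ => f x.1 * g x.2) _ x := h1.mul h2
  rw [pdS, h3.fderiv]
  simp [mul_comm]

lemma nb_deriv_smooth (g : ℝ → ℝ) (hg : ContDiff ℝ (⊤ : ℕ∞) g) :
    ContDiff ℝ (⊤ : ℕ∞) (deriv g) := (contDiff_infty_iff_deriv.1 hg).2

lemma nb_int (c f g : ℝ → ℝ) (hf : ContDiff ℝ (⊤ : ℕ∞) f) (hg : ContDiff ℝ (⊤ : ℕ∞) g) :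
    (∫ x : ℝ × ℝ, (4 * (pdS (pdT (fun x : ℝ × ℝ => f x.1 * g x.2)) x) ^ 2
      - c x.1 * (pdT (fun x : ℝ × ℝ => f x.1 * g x.2) x) ^ 2))
    = (∫ s, (4 * (deriv f s) ^ 2 - c s * (f s) ^ 2)) * ∫ t, (deriv g t) ^ 2 := by
  rw [nb_pdT f g hf hg, nb_pdS f (deriv g) hf (nb_deriv_smooth g hg)]
  rw [← integral_prod_mul, ← Measure.volume_eq_prod]
  congr 1
  funext x
  ring

lemma nb_smooth (f g : ℝ → ℝ) (hf : ContDiff ℝ (⊤ : ℕ∞) f) (hg : ContDiff ℝ (⊤ : ℕ∞) g) :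
    ContDiff ℝ (⊤ : ℕ∞) (fun x : ℝ × ℝ => f x.1 * g x.2) :=
  (hf.comp contDiff_fst).mul (hg.comp contDiff_snd)

lemma nb_supp (f g : ℝ → ℝ) (hf : HasCompactSupport f) (hg : HasCompactSupport g) :
    HasCompactSupport (fun x : ℝ × ℝ => f x.1 * g x.2) := by
  refine HasCompactSupport.intro (hf.isCompact.prod hg.isCompact) ?_
  intro x hx
  by_contra h
  have h := mul_ne_zero_iff.1 h
  exact hx ⟨subset_tsupport _ h.1, subset_tsupport _ h.2⟩

lemma nb_sq_pos (h : ℝ → ℝ) (hc : Continuous h) (hs : HasCompactSupport h) (x : ℝ)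
    (hx : h x ≠ 0) : 0 < ∫ s, (h s) ^ 2 := by
  refine Continuous.integral_pos_of_hasCompactSupport_nonneg_nonzero (x := x) (by fun_prop) ?_
    (fun s => sq_nonneg _) (by positivity)
  exact hs.comp_left (g := fun y : ℝ => y ^ 2) (by simp)

lemma nb_sq_integrable (c h : ℝ → ℝ) (hcc : Continuous c) (hc : Continuous h)
    (hs : HasCompactSupport h) : Integrable (fun s => c s * (h s) ^ 2) := by
  refine Continuous.integrable_of_hasCompactSupport (by fun_prop) ?_
  exact (hs.comp_left (g := fun y : ℝ => y ^ 2) (by simp)).mul_left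

lemma nb_scale (a L : ℝ) (hL : 0 < L) (h : ℝ → ℝ) :
    ∫ s, a * (h (L * s)) ^ 2 = a * (L⁻¹ * ∫ s, (h s) ^ 2) := by
  rw [integral_const_mul, Measure.integral_comp_mul_left (fun s => (h s) ^ 2) L,
    abs_of_pos (inv_pos.2 hL), smul_eq_mul]

/-- if `c : ℝ → ℝ` is continuous and bounded below by `m > 0`, then the
functional `u ↦ ∫_{ℝ²} (4(∂ₛ∂ₜu)² − c(s)(∂ₜu)²)` is indefinite on `C_c^∞(ℝ²)`
(H-instability of the normal bundle of an unbounded curve with `κ² + 2K` uniformly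
positive). -/
theorem normal_bundle_H_unstable
    (c : ℝ → ℝ) (hc : Continuous c) (m : ℝ) (hm : 0 < m) (hcm : ∀ s, m ≤ c s) :
    ∃ u v : ℝ × ℝ → ℝ,
      (ContDiff ℝ (⊤ : ℕ∞) u ∧ HasCompactSupport u) ∧ (ContDiff ℝ (⊤ : ℕ∞) v ∧ HasCompactSupport v) ∧
      0 < (∫ x : ℝ × ℝ, (4 * (pdS (pdT u) x) ^ 2 - c x.1 * (pdT u x) ^ 2)) ∧
      (∫ x : ℝ × ℝ, (4 * (pdS (pdT v) x) ^ 2 - c x.1 * (pdT v x) ^ 2)) < 0 := by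
  obtain ⟨φ, hφ, hφs, hφ1, hφ0⟩ : ∃ φ : ℝ → ℝ, ContDiff ℝ (⊤ : ℕ∞) φ ∧ HasCompactSupport φ ∧
      φ 0 = 1 ∧ ∀ x, 2 ≤ |x| → φ x = 0 := by
    let b : ContDiffBump (0 : ℝ) := ⟨1, 2, by norm_num, by norm_num⟩
    refine ⟨b, b.contDiff, b.hasCompactSupport, b.one_of_mem_closedBall (by simp [b]), ?_⟩
    intro x hx
    exact b.zero_of_le_dist (by simpa [b, Real.dist_eq] using hx)
  have hd : ContDiff ℝ (⊤ : ℕ∞) (deriv φ) := nb_deriv_smooth φ hφ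
  have hds : HasCompactSupport (deriv φ) := hφs.deriv
  obtain ⟨x0, hx0⟩ : ∃ x, deriv φ x ≠ 0 := by
    by_contra! h
    have := is_const_of_deriv_eq_zero (hφ.differentiable (by simp)) h 0 2
    rw [hφ1, hφ0 2 (by norm_num)] at this
    norm_num at this
  have hA : 0 < ∫ s, (deriv φ s) ^ 2 := nb_sq_pos _ hd.continuous hds x0 hx0
  have hB : 0 < ∫ s, (φ s) ^ 2 := nb_sq_pos _ hφ.continuous hφs 0 (by simp [hφ1])
  set A := ∫ s, (deriv φ s) ^ 2 with hAdef
  set B := ∫ s, (φ s) ^ 2 with hBdef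
  have hder : ∀ L : ℝ, deriv (fun s => φ (L * s)) = fun s => L * deriv φ (L * s) := by
    intro L
    funext s
    simpa using deriv_comp_mul_left L φ s
  have hsm : ∀ L : ℝ, ContDiff ℝ (⊤ : ℕ∞) (fun s => φ (L * s)) := fun L =>
    hφ.comp (contDiff_const.mul contDiff_id)
  have hsc : ∀ (L : ℝ), 0 < L → ∀ h : ℝ → ℝ, HasCompactSupport h →
      HasCompactSupport (fun s => h (L * s)) := fun L hL h hh =>
    hh.comp_homeomorph (Homeomorph.mulLeft₀ L hL.ne')
  have hint : ∀ (L : ℝ), 0 < L → ∀ k : ℝ → ℝ, Continuous k →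
      Integrable (fun s => 4 * L ^ 2 * (deriv φ (L * s)) ^ 2 - k s * (φ (L * s)) ^ 2) := by
    intro L hL k hk
    have := hd.continuous
    exact (nb_sq_integrable (fun _ => 4 * L ^ 2) (fun s => deriv φ (L * s)) continuous_const
      (by fun_prop) (hsc L hL _ hds)).sub
      (nb_sq_integrable k (fun s => φ (L * s)) hk (hsm L).continuous (hsc L hL _ hφs))
  have hconst : ∀ (L : ℝ), 0 < L → ∀ k : ℝ,
      ∫ s, (4 * L ^ 2 * (deriv φ (L * s)) ^ 2 - k * (φ (L * s)) ^ 2)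
        = L⁻¹ * (4 * L ^ 2 * A - k * B) := by
    intro L hL k
    have := hd.continuous
    rw [integral_sub (nb_sq_integrable (fun _ => 4 * L ^ 2) (fun s => deriv φ (L * s))
      continuous_const (by fun_prop) (hsc L hL _ hds))
      (nb_sq_integrable (fun _ => k) (fun s => φ (L * s)) continuous_const
        (hsm L).continuous (hsc L hL _ hφs)), nb_scale _ L hL, nb_scale _ L hL]
    ring
  have hJ : ∀ L : ℝ, (∫ s, (4 * (deriv (fun s => φ (L * s)) s) ^ 2 - c s * (φ (L * s)) ^ 2))
      = ∫ s, (4 * L ^ 2 * (deriv φ (L * s)) ^ 2 - c s * (φ (L * s)) ^ 2) := by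
    intro L
    rw [hder]
    congr 1
    funext s
    ring
  obtain ⟨M, hM⟩ : ∃ M, ∀ s ∈ Set.Icc (-2 : ℝ) 2, c s ≤ M := by
    obtain ⟨M, hM⟩ := (isCompact_Icc (a := (-2 : ℝ)) (b := 2)).bddAbove_image hc.continuousOn
    exact ⟨M, fun s hs => hM ⟨s, hs, rfl⟩⟩
  obtain ⟨L, hL1, hL⟩ : ∃ L : ℝ, 1 ≤ L ∧ 0 < 4 * L ^ 2 * A - M * B := by
    refine ⟨max 1 (M * B / A), le_max_left _ _, ?_⟩
    set L := max 1 (M * B / A)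
    have h1 : 1 ≤ L := le_max_left _ _
    have h2 : M * B ≤ L * A := (div_le_iff₀ hA).1 (le_max_right _ _)
    nlinarith [mul_pos (lt_of_lt_of_le one_pos h1) hA,
      mul_nonneg (sub_nonneg.2 h1) (mul_pos (lt_of_lt_of_le one_pos h1) hA).le]
  obtain ⟨l, hl0, hl⟩ : ∃ l : ℝ, 0 < l ∧ 4 * l ^ 2 * A - m * B < 0 := by
    refine ⟨√(m * B / (8 * A)), Real.sqrt_pos.2 (by positivity), ?_⟩
    rw [Real.sq_sqrt (by positivity)]
    have : 4 * (m * B / (8 * A)) * A = m * B / 2 := by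
      field_simp
      norm_num
    rw [this]
    nlinarith [mul_pos hm hB]
  have hL0 : 0 < L := lt_of_lt_of_le one_pos hL1
  refine ⟨fun x => φ (L * x.1) * φ x.2, fun x => φ (l * x.1) * φ x.2,
    ⟨nb_smooth (fun s => φ (L * s)) φ (hsm L) hφ,
      nb_supp (fun s => φ (L * s)) φ (hsc L hL0 φ hφs) hφs⟩,
    ⟨nb_smooth (fun s => φ (l * s)) φ (hsm l) hφ,
      nb_supp (fun s => φ (l * s)) φ (hsc l hl0 φ hφs) hφs⟩, ?_, ?_⟩
  · rw [nb_int c (fun s => φ (L * s)) φ (hsm L) hφ, hJ L]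
    refine mul_pos (lt_of_lt_of_le ?_ (integral_mono (hint L hL0 (fun _ => M) continuous_const)
      (hint L hL0 c hc) ?_)) hA
    · rw [hconst L hL0 M]
      exact mul_pos (inv_pos.2 hL0) hL
    · intro s
      by_cases hs : 2 ≤ |L * s|
      · simp [hφ0 _ hs]
      · have hs2 : |s| ≤ 2 := by
          rw [abs_mul, abs_of_pos hL0] at hs
          nlinarith [abs_nonneg s]
        have := mul_le_mul_of_nonneg_right (hM s (abs_le.1 hs2)) (sq_nonneg (φ (L * s)))
        dsimp only
        linarith
  · rw [nb_int c (fun s => φ (l * s)) φ (hsm l) hφ, hJ l]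
    refine mul_neg_of_neg_of_pos (lt_of_le_of_lt (integral_mono (hint l hl0 c hc)
      (hint l hl0 (fun _ => m) continuous_const) ?_) ?_) hA
    · intro s
      have := mul_le_mul_of_nonneg_right (hcm s) (sq_nonneg (φ (l * s)))
      dsimp only
      linarith
    · rw [hconst l hl0 m]
      exact mul_neg_of_pos_of_neg (inv_pos.2 hl0) hl
end
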